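/- arXiv:1901.06482 — 14 statements merged into one kernel-verified Lean document; each statement's English description precedes it below -/
import Mathlib

section
/- Let (u^t, v^t)_{t≥0} be a Greenkhorn-type sequence and let (u*, v*) be a global minimizer of f. Then for every t ≥ 0, f(u^t, v^t) − f(u*, v*) ≤ 2(‖u*‖_∞ + ‖v*‖_∞) · E(u^t, v^t). -/
open Finset

/-- ℓ∞-norm of a vector in ℝ^n. -/
noncomputable def infNorm {n : ℕ} (u : Fin n → ℝ) : ℝ := ⨆ i, |u i|

/-- The matrix B(u,v) with entries exp(u_i + v_j - C_ij/η). -/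
noncomputable def Bmat {n : ℕ} (η : ℝ) (C : Fin n → Fin n → ℝ) (u v : Fin n → ℝ)
    (i j : Fin n) : ℝ := Real.exp (u i + v j - C i j / η)

/-- Row sums of B(u,v). -/
noncomputable def rowSum {n : ℕ} (η : ℝ) (C : Fin n → Fin n → ℝ) (u v : Fin n → ℝ)
    (i : Fin n) : ℝ := ∑ j, Bmat η C u v i j

/-- Column sums of B(u,v). -/
noncomputable def colSum {n : ℕ} (η : ℝ) (C : Fin n → Fin n → ℝ) (u v : Fin n → ℝ)
    (j : Fin n) : ℝ := ∑ i, Bmat η C u v i j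

/-- Dual objective f(u,v) = Σ_{ij} B(u,v)_{ij} - ⟨u,r⟩ - ⟨v,c⟩. -/
noncomputable def dualObj {n : ℕ} (η : ℝ) (C : Fin n → Fin n → ℝ) (r c : Fin n → ℝ)
    (u v : Fin n → ℝ) : ℝ :=
  (∑ i, ∑ j, Bmat η C u v i j) - (∑ i, u i * r i) - (∑ j, v j * c j)

/-- Residual E(u,v). -/
noncomputable def resid {n : ℕ} (η : ℝ) (C : Fin n → Fin n → ℝ) (r c : Fin n → ℝ)
    (u v : Fin n → ℝ) : ℝ :=
  (∑ i, |rowSum η C u v i - r i|) + (∑ j, |colSum η C u v j - c j|)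

/-- A single Greenkhorn-type update. -/
def GreenkhornStep {n : ℕ} (η : ℝ) (C : Fin n → Fin n → ℝ) (r c : Fin n → ℝ)
    (u v u' v' : Fin n → ℝ) : Prop :=
  (∃ I, u' I = u I + Real.log (r I) - Real.log (rowSum η C u v I) ∧
    (∀ i, i ≠ I → u' i = u i) ∧ v' = v) ∨
  (∃ J, v' J = v J + Real.log (c J) - Real.log (colSum η C u v J) ∧
    (∀ j, j ≠ J → v' j = v j) ∧ u' = u)


theorem aux_col {n : ℕ} (η : ℝ) (C : Fin n → Fin n → ℝ) (u v : Fin n → ℝ) (j : Fin n) :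
    colSum η C u v j = rowSum η (fun a b => C b a) v u j := by
  unfold colSum rowSum Bmat
  refine Finset.sum_congr rfl fun i _ => ?_
  rw [add_comm (u i)]

theorem aux_dual {n : ℕ} (η : ℝ) (C : Fin n → Fin n → ℝ) (r c u v : Fin n → ℝ) :
    dualObj η C r c u v = dualObj η (fun a b => C b a) c r v u := by
  unfold dualObj
  rw [Finset.sum_comm]
  have : ∀ i j, Bmat η C u v i j = Bmat η (fun a b => C b a) v u j i := by
    intro i j
    unfold Bmat
    rw [add_comm (u i)]
  simp only [this]
  ring

theorem aux_pos {n : ℕ} (η : ℝ) (C : Fin n → Fin n → ℝ) (u v : Fin n → ℝ) (i : Fin n) :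
    0 < rowSum η C u v i := by
  unfold rowSum Bmat
  exact Finset.sum_pos (fun j _ => Real.exp_pos _) ⟨i, Finset.mem_univ i⟩

theorem aux_diff {n : ℕ} (η : ℝ) (C : Fin n → Fin n → ℝ) (r c u v : Fin n → ℝ) (I : Fin n)
    (s : ℝ) : dualObj η C r c (fun i => u i + if i = I then s else 0) v - dualObj η C r c u v
      = (Real.exp s - 1) * rowSum η C u v I - s * r I := by
  have h1 : ∀ i, ∑ j, Bmat η C (fun i => u i + if i = I then s else 0) v i j
      = ∑ j, Bmat η C u v i j + if i = I then (Real.exp s - 1) * rowSum η C u v I else 0 := by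
    intro i
    by_cases h : i = I
    · subst h
      simp only [if_true, rowSum]
      rw [Finset.mul_sum, ← Finset.sum_add_distrib]
      refine Finset.sum_congr rfl fun j _ => ?_
      simp only [Bmat, if_true]
      rw [show u i + s + v j - C i j / η = s + (u i + v j - C i j / η) by ring, Real.exp_add]
      ring
    · simp [h, Bmat]
  unfold dualObj
  simp only [h1, Finset.sum_add_distrib, add_mul, ite_mul, zero_mul, Finset.sum_ite_eq',
    Finset.mem_univ, if_true]
  ring

theorem aux_opt {n : ℕ} (η : ℝ) (C : Fin n → Fin n → ℝ) (r c us vs : Fin n → ℝ)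
    (hr : ∀ i, 0 < r i)
    (hmin : ∀ u v : Fin n → ℝ, dualObj η C r c us vs ≤ dualObj η C r c u v) (I : Fin n) :
    rowSum η C us vs I = r I := by
  have hR := aux_pos η C us vs I
  have h := aux_diff η C r c us vs I (-Real.log (rowSum η C us vs I / r I))
  have h2 := hmin (fun i => us i + if i = I then (-Real.log (rowSum η C us vs I / r I)) else 0) vs
  generalize rowSum η C us vs I = R at *
  have hrI := hr I
  by_contra hne
  have hq : 0 < R / r I := by positivity
  have h3 := Real.log_lt_sub_one_of_pos hq (by rwa [Ne, div_eq_one_iff_eq hrI.ne'])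
  rw [Real.exp_neg, Real.exp_log hq] at h
  have h4 : ((R / r I)⁻¹ - 1) * R = r I - R := by field_simp
  have h5 : (R / r I - 1) * r I = R - r I := by field_simp
  have h6 := mul_lt_mul_of_pos_right h3 hrI
  linarith

theorem aux_half {n : ℕ} (η : ℝ) (C : Fin n → Fin n → ℝ) (u v us vs : Fin n → ℝ) (M : ℝ)
    (h : ∀ j, v j - vs j ≤ M) (I : Fin n) :
    Real.log (rowSum η C u v I) ≤ u I - us I + M + Real.log (rowSum η C us vs I) := by
  have h1 : rowSum η C u v I ≤ Real.exp (u I - us I + M) * rowSum η C us vs I := by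
    unfold rowSum Bmat
    rw [Finset.mul_sum]
    refine Finset.sum_le_sum fun j _ => ?_
    rw [← Real.exp_add]
    apply Real.exp_le_exp.2
    linarith [h j]
  have h2 := Real.log_le_log (aux_pos η C u v I) h1
  rwa [Real.log_mul (Real.exp_pos _).ne' (aux_pos η C us vs I).ne', Real.log_exp] at h2

theorem aux_step {n : ℕ} (η : ℝ) (C : Fin n → Fin n → ℝ) (r u v us vs : Fin n → ℝ) (M x : ℝ)
    (h : ∀ j, |v j - vs j| ≤ M) (I : Fin n) (ho : rowSum η C us vs I = r I)
    (hx : x = u I + Real.log (r I) - Real.log (rowSum η C u v I)) : |x - us I| ≤ M := by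
  have h1 := aux_half η C u v us vs M (fun j => (abs_le.1 (h j)).2) I
  have h2 := aux_half η C us vs u v M (fun j => by linarith [(abs_le.1 (h j)).1]) I
  rw [ho] at h1 h2
  rw [abs_le]
  constructor <;> linarith

theorem aux_conv {n : ℕ} (η : ℝ) (C : Fin n → Fin n → ℝ) (r c u v us vs : Fin n → ℝ) :
    dualObj η C r c u v - dualObj η C r c us vs ≤
      ∑ i, (u i - us i) * (rowSum η C u v i - r i)
      + ∑ j, (v j - vs j) * (colSum η C u v j - c j) := by
  have h1 : ∑ i, ∑ j, Bmat η C u v i j - ∑ i, ∑ j, Bmat η C us vs i j ≤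
      ∑ i, (u i - us i) * rowSum η C u v i + ∑ j, (v j - vs j) * colSum η C u v j := by
    unfold rowSum colSum
    simp only [Finset.mul_sum]
    rw [Finset.sum_comm (f := fun j i => (v j - vs j) * Bmat η C u v i j)]
    simp only [← Finset.sum_add_distrib, ← Finset.sum_sub_distrib]
    refine Finset.sum_le_sum fun i _ => Finset.sum_le_sum fun j _ => ?_
    have h2 : Bmat η C us vs i j = Bmat η C u v i j * Real.exp (us i - u i + (vs j - v j)) := by
      unfold Bmat
      rw [← Real.exp_add]
      congr 1
      ring
    have h3 := Real.add_one_le_exp (us i - u i + (vs j - v j))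
    have h4 : 0 < Bmat η C u v i j := Real.exp_pos _
    have h5 := mul_le_mul_of_nonneg_left h3 h4.le
    rw [h2]
    linarith
  unfold dualObj
  simp only [mul_sub, Finset.sum_sub_distrib, sub_mul] at h1 ⊢
  linarith

theorem aux_abs {n : ℕ} (a b : Fin n → ℝ) (M : ℝ) (h : ∀ i, |a i| ≤ M) :
    ∑ i, a i * b i ≤ M * ∑ i, |b i| := by
  rw [Finset.mul_sum]
  refine Finset.sum_le_sum fun i _ => ?_
  calc a i * b i ≤ |a i * b i| := le_abs_self _
    _ = |a i| * |b i| := abs_mul _ _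
    _ ≤ _ := mul_le_mul_of_nonneg_right (h i) (abs_nonneg _)

theorem aux_inf {n : ℕ} (u : Fin n → ℝ) (i : Fin n) : |u i| ≤ infNorm u :=
  le_ciSup (f := fun i => |u i|) (Set.finite_range _).bddAbove i

theorem aux_inf0 {n : ℕ} (u : Fin n → ℝ) : 0 ≤ infNorm u :=
  Real.iSup_nonneg fun _ => abs_nonneg _

theorem stmt0 (n : ℕ) (hn : 2 ≤ n) (η : ℝ) (hη : 0 < η)
    (C : Fin n → Fin n → ℝ) (hC : ∀ i j, 0 ≤ C i j)
    (r c : Fin n → ℝ) (hr : ∀ i, 0 < r i) (hc : ∀ j, 0 < c j)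
    (hr1 : ∑ i, r i = 1) (hc1 : ∑ j, c j = 1)
    (U V : ℕ → Fin n → ℝ) (hU0 : U 0 = 0) (hV0 : V 0 = 0)
    (hstep : ∀ t, GreenkhornStep η C r c (U t) (V t) (U (t + 1)) (V (t + 1)))
    (us vs : Fin n → ℝ)
    (hmin : ∀ u v : Fin n → ℝ, dualObj η C r c us vs ≤ dualObj η C r c u v) :
    ∀ t : ℕ, dualObj η C r c (U t) (V t) - dualObj η C r c us vs ≤
      2 * (infNorm us + infNorm vs) * resid η C r c (U t) (V t) := by
  have hrow := aux_opt η C r c us vs hr hmin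
  have hcol := aux_opt η (fun a b => C b a) c r vs us hc (fun u v => by
    rw [← aux_dual η C r c us vs, ← aux_dual η C r c v u]; exact hmin v u)
  have hu0 := aux_inf0 us
  have hv0 := aux_inf0 vs
  have key : ∀ t, (∀ i, |U t i - us i| ≤ infNorm us + infNorm vs) ∧
      (∀ j, |V t j - vs j| ≤ infNorm us + infNorm vs) := by
    intro t
    induction t with
    | zero =>
      rw [hU0, hV0]
      constructor
      · intro i
        have := aux_inf us i
        simp only [Pi.zero_apply, zero_sub, abs_neg]
        linarith
      · intro i
        have := aux_inf vs i
        simp only [Pi.zero_apply, zero_sub, abs_neg]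
        linarith
    | succ t ih =>
      obtain ⟨ihu, ihv⟩ := ih
      rcases hstep t with ⟨I, h1, h2, h3⟩ | ⟨J, h1, h2, h3⟩
      · refine ⟨fun i => ?_, by rw [h3]; exact ihv⟩
        by_cases hi : i = I
        · subst hi
          exact aux_step η C r (U t) (V t) us vs _ _ ihv i (hrow i) h1
        · rw [h2 i hi]; exact ihu i
      · refine ⟨by rw [h3]; exact ihu, fun j => ?_⟩
        by_cases hj : j = J
        · subst hj
          rw [aux_col] at h1
          exact aux_step η _ c (V t) (U t) vs us _ _ ihu j (hcol j) h1
        · rw [h2 j hj]; exact ihv j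
  intro t
  obtain ⟨ku, kv⟩ := key t
  have h1 := aux_conv η C r c (U t) (V t) us vs
  have h2 := aux_abs (fun i => U t i - us i) (fun i => rowSum η C (U t) (V t) i - r i) _ ku
  have h3 := aux_abs (fun i => V t i - vs i) (fun i => colSum η C (U t) (V t) i - c i) _ kv
  have hE : 0 ≤ resid η C r c (U t) (V t) := by
    unfold resid
    positivity
  have h4 := mul_nonneg (add_nonneg hu0 hv0) hE
  have h5 : (infNorm us + infNorm vs) * resid η C r c (U t) (V t) =
    (infNorm us + infNorm vs) * (∑ i, |rowSum η C (U t) (V t) i - r i|) +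
    (infNorm us + infNorm vs) * (∑ j, |colSum η C (U t) (V t) j - c j|) := by
    unfold resid
    ring
  linarith
end

section
/- For every (u, v) ∈ ℝ^n × ℝ^n and every global minimizer (u*, v*) of f, one has f(u, v) − f(u*, v*) ≤ (‖u − u*‖_∞ + ‖v − v*‖_∞) · E(u, v). -/
open Finset

theorem stmt1 (n : ℕ) (hn : 2 ≤ n) (η : ℝ) (hη : 0 < η)
    (C : Fin n → Fin n → ℝ) (hC : ∀ i j, 0 ≤ C i j)
    (r c : Fin n → ℝ) (hr : ∀ i, 0 < r i) (hc : ∀ j, 0 < c j)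
    (hr1 : ∑ i, r i = 1) (hc1 : ∑ j, c j = 1)
    (us vs : Fin n → ℝ)
    (hmin : ∀ u v : Fin n → ℝ, dualObj η C r c us vs ≤ dualObj η C r c u v) :
    ∀ u v : Fin n → ℝ, dualObj η C r c u v - dualObj η C r c us vs ≤
      (infNorm (u - us) + infNorm (v - vs)) * resid η C r c u v := by
  intro u v
  have hB : ∀ i j, Bmat η C u v i j - Bmat η C us vs i j ≤
      (u i - us i) * Bmat η C u v i j + (v j - vs j) * Bmat η C u v i j := by
    intro i j
    unfold Bmat
    have h1 := Real.add_one_le_exp ((us i + vs j - C i j / η) - (u i + v j - C i j / η))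
    have h2 := Real.exp_pos (u i + v j - C i j / η)
    have h3 : Real.exp (us i + vs j - C i j / η) = Real.exp (u i + v j - C i j / η) *
        Real.exp ((us i + vs j - C i j / η) - (u i + v j - C i j / η)) := by
      rw [← Real.exp_add]; congr 1; ring
    have h4 := mul_le_mul_of_nonneg_left h1 h2.le
    rw [← h3] at h4
    linarith
  have hS : (∑ i, ∑ j, Bmat η C u v i j) - (∑ i, ∑ j, Bmat η C us vs i j) ≤
      (∑ i, (u i - us i) * rowSum η C u v i) + ∑ j, (v j - vs j) * colSum η C u v j := by
    have e1 : ∑ j, (v j - vs j) * colSum η C u v j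
        = ∑ i, ∑ j, (v j - vs j) * Bmat η C u v i j := by
      rw [Finset.sum_comm]
      simp only [colSum, Finset.mul_sum]
    rw [e1]
    simp only [rowSum, Finset.mul_sum]
    simp only [← Finset.sum_sub_distrib, ← Finset.sum_add_distrib]
    exact Finset.sum_le_sum fun i _ => Finset.sum_le_sum fun j _ => hB i j
  have hN : ∀ (w : Fin n → ℝ) i, |w i| ≤ infNorm w := fun w i =>
    le_ciSup (f := fun i => |w i|) (Set.finite_range _).bddAbove i
  have hN0 : ∀ w : Fin n → ℝ, 0 ≤ infNorm w := fun w => Real.iSup_nonneg fun i => abs_nonneg _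
  have hP : ∀ w z : Fin n → ℝ, ∑ i, w i * z i ≤ infNorm w * ∑ i, |z i| := by
    intro w z
    rw [Finset.mul_sum]
    refine Finset.sum_le_sum fun i _ => ?_
    calc w i * z i ≤ |w i * z i| := le_abs_self _
      _ = |w i| * |z i| := abs_mul _ _
      _ ≤ _ := mul_le_mul_of_nonneg_right (hN w i) (abs_nonneg _)
  have p1 := hP (u - us) (fun i => rowSum η C u v i - r i)
  have p2 := hP (v - vs) (fun j => colSum η C u v j - c j)
  have a1 : 0 ≤ ∑ i, |rowSum η C u v i - r i| := Finset.sum_nonneg fun i _ => abs_nonneg _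
  have a2 : 0 ≤ ∑ j, |colSum η C u v j - c j| := Finset.sum_nonneg fun i _ => abs_nonneg _
  have m1 := mul_nonneg (hN0 (u - us)) a2
  have m2 := mul_nonneg (hN0 (v - vs)) a1
  simp only [Pi.sub_apply, mul_sub, Finset.sum_sub_distrib] at p1 p2
  simp only [sub_mul, Finset.sum_sub_distrib] at p1 p2 hS
  unfold dualObj resid
  linarith
end

section
/- Let (u*, v*) ∈ ℝ^n × ℝ^n satisfy r_i(B(u*,v*)) = r_i for all i and c_j(B(u*,v*)) = c_j for all j. If (u', v') is obtained from (u, v) ∈ ℝ^n × ℝ^n by a single Greenkhorn-type update, i.e. either there is an index I with u'_I = u_I + log r_I − log r_I(B(u,v)), u'_i = u_i for all i ≠ I, and v' = v, or there is an index J with v'_J = v_J + log c_J − log c_J(B(u,v)), v'_j = v_j for all j ≠ J, and u' = u, then max{‖u' − u*‖_∞, ‖v' − v*‖_∞} ≤ max{‖u − u*‖_∞, ‖v − v*‖_∞}. -/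
open Finset

lemma aux_half_s2 {n : ℕ} (hn : 2 ≤ n) (a b M : ℝ) (x y K : Fin n → ℝ)
    (h : ∀ j, x j - y j ≤ M) :
    a + Real.log (∑ j, Real.exp (b + x j - K j)) ≤
      M + b + Real.log (∑ j, Real.exp (a + y j - K j)) := by
  have : NeZero n := ⟨by omega⟩
  have p1 : 0 < ∑ j, Real.exp (b + x j - K j) :=
    Finset.sum_pos (fun _ _ => Real.exp_pos _) Finset.univ_nonempty
  have p2 : 0 < ∑ j, Real.exp (a + y j - K j) :=
    Finset.sum_pos (fun _ _ => Real.exp_pos _) Finset.univ_nonempty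
  have hle : ∑ j, Real.exp (b + x j - K j) ≤
      Real.exp (M + b - a) * ∑ j, Real.exp (a + y j - K j) := by
    rw [Finset.mul_sum]
    refine Finset.sum_le_sum fun j _ => ?_
    rw [← Real.exp_add]
    exact Real.exp_le_exp.mpr (by linarith [h j])
  have := Real.log_le_log p1 hle
  rw [Real.log_mul (Real.exp_pos _).ne' p2.ne', Real.log_exp] at this
  linarith

lemma aux_abs_s2 {n : ℕ} (hn : 2 ≤ n) (a b M : ℝ) (x y K : Fin n → ℝ)
    (h : ∀ j, |x j - y j| ≤ M) :
    |a + Real.log (∑ j, Real.exp (b + y j - K j)) -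
      Real.log (∑ j, Real.exp (a + x j - K j)) - b| ≤ M := by
  have h1 := aux_half_s2 hn a b M y x K (fun j => by linarith [(abs_le.mp (h j)).1])
  have h2 := aux_half_s2 hn b a M x y K (fun j => (abs_le.mp (h j)).2)
  rw [abs_le]
  constructor <;> linarith

lemma le_infNorm {n : ℕ} (w : Fin n → ℝ) (i : Fin n) : |w i| ≤ infNorm w :=
  le_ciSup (f := fun i => |w i|) (Set.finite_range _).bddAbove i

lemma infNorm_le {n : ℕ} (hn : 2 ≤ n) (w : Fin n → ℝ) (M : ℝ) (h : ∀ i, |w i| ≤ M) :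
    infNorm w ≤ M := by
  have : NeZero n := ⟨by omega⟩
  exact ciSup_le h

theorem stmt2 (n : ℕ) (hn : 2 ≤ n) (η : ℝ) (hη : 0 < η)
    (C : Fin n → Fin n → ℝ) (hC : ∀ i j, 0 ≤ C i j)
    (r c : Fin n → ℝ) (hr : ∀ i, 0 < r i) (hc : ∀ j, 0 < c j)
    (hr1 : ∑ i, r i = 1) (hc1 : ∑ j, c j = 1)
    (us vs : Fin n → ℝ)
    (hrow : ∀ i, rowSum η C us vs i = r i) (hcol : ∀ j, colSum η C us vs j = c j)
    (u v u' v' : Fin n → ℝ)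
    (hstep : GreenkhornStep η C r c u v u' v') :
    max (infNorm (u' - us)) (infNorm (v' - vs)) ≤
      max (infNorm (u - us)) (infNorm (v - vs)) := by
  have hu : ∀ i, |u i - us i| ≤ max (infNorm (u - us)) (infNorm (v - vs)) :=
    fun i => (le_infNorm (u - us) i).trans (le_max_left _ _)
  have hv : ∀ i, |v i - vs i| ≤ max (infNorm (u - us)) (infNorm (v - vs)) :=
    fun i => (le_infNorm (v - vs) i).trans (le_max_right _ _)
  generalize max (infNorm (u - us)) (infNorm (v - vs)) = M at hu hv ⊢
  rcases hstep with ⟨I, hI, ho, rfl⟩ | ⟨J, hJ, ho, rfl⟩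
  · refine max_le (infNorm_le hn _ _ fun i => ?_) (infNorm_le hn _ _ hv)
    rw [Pi.sub_apply]
    by_cases hi : i = I
    · subst hi
      rw [hI, ← hrow]
      exact aux_abs_s2 hn (u i) (us i) M v' vs (fun j => C i j / η) hv
    · rw [ho i hi]; exact hu i
  · refine max_le (infNorm_le hn _ _ hu) (infNorm_le hn _ _ fun j => ?_)
    rw [Pi.sub_apply]
    by_cases hj : j = J
    · subst hj
      rw [hJ, ← hcol]
      have := aux_abs_s2 hn (v j) (vs j) M u' us (fun i => C i j / η) hu
      have e : ∀ w z : Fin n → ℝ, colSum η C w z j =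
          ∑ i, Real.exp (z j + w i - C i j / η) := fun w z =>
        Finset.sum_congr rfl fun i _ => by rw [Bmat, add_comm (w i)]
      rw [e, e]
      exact this
    · rw [ho j hj]; exact hv j
end

section
/- There exists a global minimizer (u*, v*) of f such that ‖u*‖_∞ ≤ R and ‖v*‖_∞ ≤ R, where R = η^{-1}‖C‖_∞ + log n − 2 log(min_{1≤i,j≤n}{r_i, c_j}). -/
open Finset

/-- ℓ∞-norm of a matrix: the maximum entry (entries are nonnegative). -/
noncomputable def matSup {n : ℕ} (C : Fin n → Fin n → ℝ) : ℝ := ⨆ i, ⨆ j, C i j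

/-- min_{1 ≤ i, j ≤ n} { r_i, c_j }. -/
noncomputable def minrc {n : ℕ} (r c : Fin n → ℝ) : ℝ := min (⨅ i, r i) (⨅ j, c j)

lemma aux_scalar (S a x : ℝ) (hS : 0 < S) (ha : 0 < a) :
    Real.exp (Real.log a - Real.log S) * S - (Real.log a - Real.log S) * a
      ≤ Real.exp x * S - x * a := by
  have h0 : Real.exp (Real.log a - Real.log S) * S = a := by
    rw [Real.exp_sub, Real.exp_log ha, Real.exp_log hS]; field_simp
  have h1 : Real.exp x * S = a * Real.exp (x - (Real.log a - Real.log S)) := by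
    rw [Real.exp_sub, Real.exp_sub, Real.exp_log ha, Real.exp_log hS]; field_simp
  have h2 := Real.add_one_le_exp (x - (Real.log a - Real.log S))
  rw [h0, h1]
  nlinarith [mul_le_mul_of_nonneg_left h2 ha.le]

lemma aux_form {n : ℕ} (η : ℝ) (C : Fin n → Fin n → ℝ) (r c u v : Fin n → ℝ) :
    dualObj η C r c u v =
      (∑ i, (Real.exp (u i) * (∑ j, Real.exp (v j - C i j / η)) - u i * r i))
        - ∑ j, v j * c j := by
  unfold dualObj Bmat
  rw [Finset.sum_sub_distrib]
  congr 2
  refine Finset.sum_congr rfl fun i _ => ?_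
  rw [Finset.mul_sum]
  refine Finset.sum_congr rfl fun j _ => ?_
  rw [← Real.exp_add]; ring_nf

lemma aux_step_s3 {n : ℕ} (hn : 0 < n) (η : ℝ) (C : Fin n → Fin n → ℝ) (r c u v : Fin n → ℝ)
    (hr : ∀ i, 0 < r i) :
    dualObj η C r c (fun i => Real.log (r i) - Real.log (∑ j, Real.exp (v j - C i j / η))) v
      ≤ dualObj η C r c u v := by
  have : Nonempty (Fin n) := ⟨⟨0, hn⟩⟩
  rw [aux_form, aux_form]
  refine sub_le_sub_right (Finset.sum_le_sum fun i _ => ?_) _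
  exact aux_scalar _ _ _ (Finset.sum_pos (fun j _ => Real.exp_pos _) Finset.univ_nonempty) (hr i)

lemma aux_symm {n : ℕ} (η : ℝ) (C : Fin n → Fin n → ℝ) (r c u v : Fin n → ℝ) :
    dualObj η C r c u v = dualObj η (fun i j => C j i) c r v u := by
  unfold dualObj Bmat
  rw [Finset.sum_comm]
  have : ∀ i j, u i + v j - C i j / η = v j + u i - C i j / η := fun i j => by ring
  simp only [this]
  ring

lemma aux_shift {n : ℕ} (η : ℝ) (C : Fin n → Fin n → ℝ) (r c u v : Fin n → ℝ)
    (hr1 : ∑ i, r i = 1) (hc1 : ∑ j, c j = 1) (t : ℝ) :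
    dualObj η C r c (fun i => u i + t) (fun j => v j - t) = dualObj η C r c u v := by
  unfold dualObj Bmat
  have : ∀ i j, u i + t + (v j - t) - C i j / η = u i + v j - C i j / η := fun i j => by ring
  simp only [this, add_mul, sub_mul, Finset.sum_add_distrib, Finset.sum_sub_distrib,
    ← Finset.mul_sum, hr1, hc1]
  ring

lemma aux_logsum {n : ℕ} (w D : Fin n → ℝ) (lo hi K : ℝ) (hD : ∀ j, 0 ≤ D j)
    (hDK : ∀ j, D j ≤ K) (hlo : Real.exp lo ≤ ∑ j, Real.exp (w j))
    (hhi : ∑ j, Real.exp (w j) ≤ Real.exp hi) :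
    lo - K ≤ Real.log (∑ j, Real.exp (w j - D j)) ∧
      Real.log (∑ j, Real.exp (w j - D j)) ≤ hi := by
  have h1 : Real.exp (lo - K) ≤ ∑ j, Real.exp (w j - D j) := by
    calc Real.exp (lo - K) = Real.exp lo * Real.exp (-K) := by
          rw [← Real.exp_add]; ring_nf
      _ ≤ (∑ j, Real.exp (w j)) * Real.exp (-K) := by gcongr
      _ ≤ _ := by
        rw [Finset.sum_mul]
        refine Finset.sum_le_sum fun j _ => ?_
        rw [← Real.exp_add]
        exact Real.exp_le_exp.2 (by linarith [hDK j])
  have h2 : ∑ j, Real.exp (w j - D j) ≤ Real.exp hi :=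
    (Finset.sum_le_sum fun j _ => Real.exp_le_exp.2 (by linarith [hD j])).trans hhi
  have hp := (Real.exp_pos _).trans_le h1
  exact ⟨(Real.le_log_iff_exp_le hp).2 h1, (Real.log_le_iff_le_exp hp).2 h2⟩

lemma aux_dom {n : ℕ} (hn : 0 < n) (η : ℝ) (C : Fin n → Fin n → ℝ) (r c u v : Fin n → ℝ)
    (hr : ∀ i, 0 < r i) (hc : ∀ j, 0 < c j)
    (hr1 : ∑ i, r i = 1) (hc1 : ∑ j, c j = 1) (K l : ℝ)
    (h0 : ∀ i j, 0 ≤ C i j / η) (hK : ∀ i j, C i j / η ≤ K)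
    (hlr : ∀ i, l ≤ Real.log (r i)) (hlc : ∀ i, l ≤ Real.log (c i)) (hl0 : l ≤ 0)
    (hr0 : ∀ i, Real.log (r i) ≤ 0) (hc0 : ∀ i, Real.log (c i) ≤ 0) :
    ∃ u' v' : Fin n → ℝ, dualObj η C r c u' v' ≤ dualObj η C r c u v ∧
      (∀ i, |u' i| ≤ K - l) ∧ (∀ i, |v' i| ≤ K - l) := by
  have : Nonempty (Fin n) := ⟨⟨0, hn⟩⟩
  have hK0 : 0 ≤ K := (h0 ⟨0, hn⟩ ⟨0, hn⟩).trans (hK _ _)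
  obtain ⟨v1, hv1, u1', hu1'⟩ : ∃ v1 : Fin n → ℝ, ∑ j, Real.exp (v1 j) = 1 ∧
      ∃ u1, dualObj η C r c u1 v1 = dualObj η C r c u v := by
    have hp : 0 < ∑ j, Real.exp (v j) :=
      Finset.sum_pos (fun j _ => Real.exp_pos _) Finset.univ_nonempty
    refine ⟨_, ?_, _, aux_shift η C r c u v hr1 hc1 (Real.log (∑ j, Real.exp (v j)))⟩
    simp only [Real.exp_sub, Real.exp_log hp]
    rw [← Finset.sum_div, div_self hp.ne']
  obtain ⟨u2, hu2⟩ : ∃ u2 : Fin n → ℝ, u2 =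
    fun i => Real.log (r i) - Real.log (∑ j, Real.exp (v1 j - C i j / η)) := ⟨_, rfl⟩
  have hstep1 : dualObj η C r c u2 v1 ≤ dualObj η C r c u v := by
    rw [← hu1', hu2]; exact aux_step_s3 hn η C r c u1' v1 hr
  have hb : ∀ i, Real.log (r i) ≤ u2 i ∧ u2 i ≤ Real.log (r i) + K := fun i => by
    have := aux_logsum v1 (fun j => C i j / η) 0 0 K (h0 i) (hK i) (by simp [hv1]) (by simp [hv1])
    rw [hu2]; constructor <;> simp only <;> linarith [this.1, this.2]
  have hs1 : Real.exp 0 ≤ ∑ i, Real.exp (u2 i) := by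
    rw [Real.exp_zero, ← hr1]
    refine Finset.sum_le_sum fun i _ => ?_
    rw [← Real.log_le_iff_le_exp (hr i)]; exact (hb i).1
  have hs2 : ∑ i, Real.exp (u2 i) ≤ Real.exp K := by
    rw [← one_mul (Real.exp K), ← hr1, Finset.sum_mul]
    refine Finset.sum_le_sum fun i _ => ?_
    calc Real.exp (u2 i) ≤ Real.exp (Real.log (r i) + K) := Real.exp_le_exp.2 (hb i).2
      _ = _ := by rw [Real.exp_add, Real.exp_log (hr i)]
  refine ⟨u2, fun j => Real.log (c j) - Real.log (∑ i, Real.exp (u2 i - C i j / η)), ?_, ?_, ?_⟩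
  · refine le_trans ?_ hstep1
    rw [aux_symm, aux_symm η C r c u2 v1]
    exact aux_step_s3 hn η (fun i j => C j i) c r v1 u2 hc
  · intro i
    rw [abs_le]
    constructor <;> linarith [(hb i).1, (hb i).2, hlr i, hr0 i]
  · intro j
    have := aux_logsum u2 (fun i => C i j / η) 0 K K (fun i => h0 i j) (fun i => hK i j) hs1 hs2
    rw [abs_le]
    constructor <;> simp only <;> linarith [this.1, this.2, hlc j, hc0 j]

theorem stmt3 (n : ℕ) (hn : 2 ≤ n) (η : ℝ) (hη : 0 < η)
    (C : Fin n → Fin n → ℝ) (hC : ∀ i j, 0 ≤ C i j)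
    (r c : Fin n → ℝ) (hr : ∀ i, 0 < r i) (hc : ∀ j, 0 < c j)
    (hr1 : ∑ i, r i = 1) (hc1 : ∑ j, c j = 1)
    (R : ℝ)
    (hR : R = matSup C / η + Real.log (n : ℝ) - 2 * Real.log (minrc r c)) :
    ∃ us vs : Fin n → ℝ,
      (∀ u v : Fin n → ℝ, dualObj η C r c us vs ≤ dualObj η C r c u v) ∧
      infNorm us ≤ R ∧ infNorm vs ≤ R := by
  have hn0 : 0 < n := by omega
  have : Nonempty (Fin n) := ⟨⟨0, hn0⟩⟩
  have hCle : ∀ i j, C i j ≤ matSup C := fun i j =>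
    (le_ciSup (f := fun j => C i j) (Set.finite_range _).bddAbove j).trans
      (le_ciSup (f := fun i => ⨆ j, C i j) (Set.finite_range _).bddAbove i)
  have hmpos : 0 < minrc r c := by
    obtain ⟨i, hi⟩ := exists_eq_ciInf_of_finite (f := r)
    obtain ⟨j, hj⟩ := exists_eq_ciInf_of_finite (f := c)
    unfold minrc
    rw [← hi, ← hj]
    exact lt_min (hr i) (hc j)
  have hmr : ∀ i, minrc r c ≤ r i := fun i =>
    (min_le_left _ _).trans (ciInf_le (Set.finite_range _).bddBelow i)
  have hmc : ∀ i, minrc r c ≤ c i := fun i =>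
    (min_le_right _ _).trans (ciInf_le (Set.finite_range _).bddBelow i)
  have hr0 : ∀ i, Real.log (r i) ≤ 0 := fun i =>
    Real.log_nonpos (hr i).le
      (hr1 ▸ Finset.single_le_sum (fun k _ => (hr k).le) (Finset.mem_univ i))
  have hc0 : ∀ i, Real.log (c i) ≤ 0 := fun i =>
    Real.log_nonpos (hc i).le
      (hc1 ▸ Finset.single_le_sum (fun k _ => (hc k).le) (Finset.mem_univ i))
  have hlr : ∀ i, Real.log (minrc r c) ≤ Real.log (r i) := fun i => Real.log_le_log hmpos (hmr i)
  have hlc : ∀ i, Real.log (minrc r c) ≤ Real.log (c i) := fun i => Real.log_le_log hmpos (hmc i)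
  have hl0 : Real.log (minrc r c) ≤ 0 := (hlr ⟨0, hn0⟩).trans (hr0 _)
  have hlogn : 0 ≤ Real.log (n : ℝ) := Real.log_natCast_nonneg n
  have hdom := fun u v => aux_dom hn0 η C r c u v hr hc hr1 hc1 (matSup C / η)
    (Real.log (minrc r c)) (fun i j => div_nonneg (hC i j) hη.le)
    (fun i j => div_le_div_of_nonneg_right (hCle i j) hη.le) hlr hlc hl0 hr0 hc0
  have hle : matSup C / η - Real.log (minrc r c) ≤ R := by rw [hR]; linarith
  have hcpt : IsCompact ((Set.univ.pi fun _ : Fin n => Set.Icc (-R) R) ×ˢ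
      (Set.univ.pi fun _ : Fin n => Set.Icc (-R) R)) :=
    (isCompact_univ_pi fun _ => isCompact_Icc).prod (isCompact_univ_pi fun _ => isCompact_Icc)
  have hmem : ∀ w : Fin n → ℝ, (∀ i, |w i| ≤ matSup C / η - Real.log (minrc r c)) →
      w ∈ (Set.univ.pi fun _ : Fin n => Set.Icc (-R) R) := fun w hw i _ =>
    abs_le.1 ((hw i).trans hle)
  have hcont : Continuous fun p : (Fin n → ℝ) × (Fin n → ℝ) => dualObj η C r c p.1 p.2 := by
    unfold dualObj Bmat
    fun_prop
  obtain ⟨u0, v0, -, h1, h2⟩ := hdom 0 0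
  obtain ⟨⟨us, vs⟩, ⟨hus, hvs⟩, hmin⟩ := hcpt.exists_isMinOn
    ⟨(u0, v0), hmem _ h1, hmem _ h2⟩ hcont.continuousOn
  refine ⟨us, vs, fun u v => ?_, ciSup_le fun i => abs_le.2 (hus i trivial),
    ciSup_le fun i => abs_le.2 (hvs i trivial)⟩
  obtain ⟨u', v', h, h1, h2⟩ := hdom u v
  exact le_trans (isMinOn_iff.1 hmin (u', v') ⟨hmem _ h1, hmem _ h2⟩) h
end

section
/- If (u*, v*) ∈ ℝ^n × ℝ^n satisfies r_i(B(u*,v*)) = r_i for all i and c_j(B(u*,v*)) = c_j for all j, then max_{1≤i≤n} u*_i − min_{1≤i≤n} u*_i ≤ η^{-1}‖C‖_∞ − log(min_{1≤i,j≤n}{r_i, c_j}), and likewise max_{1≤i≤n} v*_i − min_{1≤i≤n} v*_i ≤ η^{-1}‖C‖_∞ − log(min_{1≤i,j≤n}{r_i, c_j}). -/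
open Finset

theorem aux_osc {n : ℕ} (η M m : ℝ) (hη : 0 < η) (C : Fin n → Fin n → ℝ)
    (hC : ∀ i j, 0 ≤ C i j) (hM : ∀ i j, C i j ≤ M) (r u v : Fin n → ℝ)
    (hr : ∀ i, 0 < r i) (hr1 : ∑ i, r i = 1) (hm : 0 < m) (hmr : ∀ i, m ≤ r i)
    (hrow : ∀ i, ∑ j, Real.exp (u i + v j - C i j / η) = r i) (hn : Nonempty (Fin n)) :
    (⨆ i, u i) - (⨅ i, u i) ≤ M / η - Real.log m := by
  have key : ∀ i k, u i - u k ≤ M / η - Real.log m := by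
    intro i k
    have h1 : r i ≤ 1 := by
      rw [← hr1]
      exact Finset.single_le_sum (fun j _ => (hr j).le) (Finset.mem_univ i)
    have h2 : Real.exp (u i - u k - M / η) * r k ≤ r i := by
      rw [← hrow k, ← hrow i, Finset.mul_sum]
      refine Finset.sum_le_sum fun j _ => ?_
      rw [← Real.exp_add]
      apply Real.exp_le_exp.mpr
      have a := div_nonneg (hC k j) hη.le
      have b := div_le_div_of_nonneg_right (hM i j) hη.le
      linarith
    have h3 : Real.exp (u i - u k - M / η) * m ≤ 1 :=
      (mul_le_mul_of_nonneg_left (hmr k) (Real.exp_pos _).le).trans (h2.trans h1)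
    rw [← Real.exp_log hm, ← Real.exp_add, Real.exp_le_one_iff] at h3
    linarith
  have h4 : (⨆ i, u i) ≤ M / η - Real.log m + ⨅ i, u i := by
    refine ciSup_le fun i => ?_
    have : u i - (M / η - Real.log m) ≤ ⨅ i, u i :=
      le_ciInf fun k => by linarith [key i k]
    linarith
  linarith

theorem stmt4 (n : ℕ) (hn : 2 ≤ n) (η : ℝ) (hη : 0 < η)
    (C : Fin n → Fin n → ℝ) (hC : ∀ i j, 0 ≤ C i j)
    (r c : Fin n → ℝ) (hr : ∀ i, 0 < r i) (hc : ∀ j, 0 < c j)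
    (hr1 : ∑ i, r i = 1) (hc1 : ∑ j, c j = 1)
    (us vs : Fin n → ℝ)
    (hrow : ∀ i, rowSum η C us vs i = r i) (hcol : ∀ j, colSum η C us vs j = c j) :
    (⨆ i, us i) - (⨅ i, us i) ≤ matSup C / η - Real.log (minrc r c) ∧
    (⨆ i, vs i) - (⨅ i, vs i) ≤ matSup C / η - Real.log (minrc r c) := by
  have hne : Nonempty (Fin n) := ⟨⟨0, by omega⟩⟩
  have hM : ∀ i j, C i j ≤ matSup C := fun i j =>
    (le_ciSup (Set.finite_range (fun j => C i j)).bddAbove j).trans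
      (le_ciSup (f := fun i => ⨆ j, C i j) (Set.finite_range _).bddAbove i)
  have hmr : ∀ i, minrc r c ≤ r i := fun i =>
    (min_le_left _ _).trans (ciInf_le (Set.finite_range r).bddBelow i)
  have hmc : ∀ i, minrc r c ≤ c i := fun i =>
    (min_le_right _ _).trans (ciInf_le (Set.finite_range c).bddBelow i)
  have hm : 0 < minrc r c := by
    obtain ⟨i, hi⟩ := exists_eq_ciInf_of_finite (f := r)
    obtain ⟨j, hj⟩ := exists_eq_ciInf_of_finite (f := c)
    unfold minrc
    rw [← hi, ← hj]
    exact lt_min (hr i) (hc j)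
  constructor
  · exact aux_osc η _ _ hη C hC hM r us vs hr hr1 hm hmr hrow hne
  · refine aux_osc η _ _ hη (fun i j => C j i) (fun i j => hC j i) (fun i j => hM j i)
      c vs us hc hc1 hm hmc (fun j => ?_) hne
    rw [← hcol j]
    refine Finset.sum_congr rfl fun i _ => ?_
    unfold Bmat
    rw [add_comm (us i)]
end

section
/- The dual objective φ is smooth with respect to the ℓ∞-norm: for all λ₁, λ₂ ∈ ℝ^m, φ(λ₁) − φ(λ₂) − ⟨b − A x(λ₂), λ₁ − λ₂⟩ ≤ (‖A‖_{1→1}² / (2η)) ‖λ₁ − λ₂‖_∞². -/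
open Finset

/-- ℓ1-norm of a vector. -/
noncomputable def l1Norm {k : ℕ} (x : Fin k → ℝ) : ℝ := ∑ i, |x i|

/-- ℓ∞-norm of a vector. -/
noncomputable def linfNorm {k : ℕ} (x : Fin k → ℝ) : ℝ := ⨆ i, |x i|

/-- ℓ1→ℓ1 operator norm of a matrix: the maximum ℓ1-norm of a column. -/
noncomputable def oneOneNorm {m n : ℕ} (A : Fin m → Fin n → ℝ) : ℝ := ⨆ j, ∑ i, |A i j|

theorem stmt8 (m n : ℕ) (A : Fin m → Fin n → ℝ) (b : Fin m → ℝ)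
    (η : ℝ) (hη : 0 < η) (f : (Fin n → ℝ) → ℝ)
    (hdiff : Differentiable ℝ f)
    (hsc : ∀ x x' : Fin n → ℝ,
      f x + fderiv ℝ f x (x' - x) + η / 2 * (l1Norm (x' - x)) ^ 2 ≤ f x')
    (xopt : (Fin m → ℝ) → (Fin n → ℝ))
    (hxopt : ∀ (lam : Fin m → ℝ) (x : Fin n → ℝ),
      -f x - ∑ j, (∑ i, A i j * lam i) * x j ≤
        -f (xopt lam) - ∑ j, (∑ i, A i j * lam i) * xopt lam j)
    (φ : (Fin m → ℝ) → ℝ)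
    (hφ : ∀ lam : Fin m → ℝ,
      φ lam = (∑ i, lam i * b i) +
        (-f (xopt lam) - ∑ j, (∑ i, A i j * lam i) * xopt lam j)) :
    ∀ lam1 lam2 : Fin m → ℝ,
      φ lam1 - φ lam2 -
        (∑ i, (b i - ∑ j, A i j * xopt lam2 j) * (lam1 i - lam2 i)) ≤
      (oneOneNorm A) ^ 2 / (2 * η) * (linfNorm (lam1 - lam2)) ^ 2 := by
  intro lam1 lam2
  set x1 := xopt lam1 with hx1
  set x2 := xopt lam2 with hx2
  have hfoc : ∀ d : Fin n → ℝ,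
      fderiv ℝ f x2 d = -∑ j, (∑ i, A i j * lam2 i) * d j := by
    intro d
    let L : (Fin n → ℝ) →L[ℝ] ℝ :=
      ∑ j, (∑ i, A i j * lam2 i) • ContinuousLinearMap.proj (R := ℝ) (φ := fun _ : Fin n => ℝ) j
    have hL : ∀ x, L x = ∑ j, (∑ i, A i j * lam2 i) * x j := by
      intro x
      simp [L]
    have hmin : IsLocalMin (fun x => f x + L x) x2 := by
      apply Filter.Eventually.of_forall
      intro x
      have := hxopt lam2 x
      simp only [hL]
      linarith
    have hd : HasFDerivAt (fun x => f x + L x) (fderiv ℝ f x2 + L) x2 :=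
      (hdiff x2).hasFDerivAt.add L.hasFDerivAt
    have h0 := hmin.hasFDerivAt_eq_zero hd
    have h1 : fderiv ℝ f x2 d + L d = 0 := by
      have := congrArg (fun T : (Fin n → ℝ) →L[ℝ] ℝ => T d) h0
      simpa using this
    rw [hL] at h1
    linarith
  have hs := hsc x2 x1
  rw [hfoc] at hs
  have hK : ∀ j, ∑ i, |A i j| ≤ oneOneNorm A := fun j =>
    le_ciSup (f := fun j => ∑ i, |A i j|) (Set.finite_range _).bddAbove j
  have hΛ : ∀ i, |lam1 i - lam2 i| ≤ linfNorm (lam1 - lam2) := fun i =>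
    le_ciSup (f := fun i => |(lam1 - lam2) i|) (Set.finite_range _).bddAbove i
  have hΛ0 : 0 ≤ linfNorm (lam1 - lam2) := Real.iSup_nonneg fun i => abs_nonneg _
  have hbd : ∑ j, (∑ i, A i j * (lam2 i - lam1 i)) * (x1 - x2) j ≤
      oneOneNorm A * linfNorm (lam1 - lam2) * l1Norm (x1 - x2) := by
    unfold l1Norm
    rw [Finset.mul_sum]
    apply Finset.sum_le_sum
    intro j _
    refine (le_abs_self _).trans ?_
    rw [abs_mul]
    apply mul_le_mul_of_nonneg_right _ (abs_nonneg _)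
    calc |∑ i, A i j * (lam2 i - lam1 i)| ≤ ∑ i, |A i j * (lam2 i - lam1 i)| :=
          Finset.abs_sum_le_sum_abs _ _
      _ ≤ ∑ i, |A i j| * linfNorm (lam1 - lam2) := by
          apply Finset.sum_le_sum
          intro i _
          rw [abs_mul, abs_sub_comm]
          exact mul_le_mul_of_nonneg_left (hΛ i) (abs_nonneg _)
      _ = (∑ i, |A i j|) * linfNorm (lam1 - lam2) := by rw [Finset.sum_mul]
      _ ≤ _ := mul_le_mul_of_nonneg_right (hK j) hΛ0
  have e1 : ∑ j, (∑ i, A i j * (lam2 i - lam1 i)) * (x1 - x2) j =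
      ∑ j, (∑ i, A i j * lam2 i) * (x1 - x2) j
        - (∑ j, (∑ i, A i j * lam1 i) * x1 j - ∑ j, (∑ i, A i j * lam1 i) * x2 j) := by
    rw [← Finset.sum_sub_distrib, ← Finset.sum_sub_distrib]
    apply Finset.sum_congr rfl
    intro j _
    simp only [mul_sub, Finset.sum_sub_distrib, Pi.sub_apply]
    ring
  have e2 : ∑ i, (b i - ∑ j, A i j * x2 j) * (lam1 i - lam2 i) =
      ∑ i, lam1 i * b i - ∑ i, lam2 i * b i
        - (∑ j, (∑ i, A i j * lam1 i) * x2 j - ∑ j, (∑ i, A i j * lam2 i) * x2 j) := by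
    have hsw : ∀ l : Fin m → ℝ,
        ∑ j, (∑ i, A i j * l i) * x2 j = ∑ i, (∑ j, A i j * x2 j) * l i := by
      intro l
      simp only [Finset.sum_mul]
      rw [Finset.sum_comm]
      refine Finset.sum_congr rfl fun i _ => Finset.sum_congr rfl fun j _ => by ring
    rw [hsw, hsw, ← Finset.sum_sub_distrib, ← Finset.sum_sub_distrib, ← Finset.sum_sub_distrib]
    exact Finset.sum_congr rfl fun i _ => by ring
  rw [hφ lam1, hφ lam2, e2, ← hx1, ← hx2]
  have hq : oneOneNorm A * linfNorm (lam1 - lam2) * l1Norm (x1 - x2)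
      - η / 2 * (l1Norm (x1 - x2)) ^ 2 ≤
      (oneOneNorm A) ^ 2 / (2 * η) * (linfNorm (lam1 - lam2)) ^ 2 := by
    rw [div_mul_eq_mul_div (oneOneNorm A ^ 2), le_div_iff₀ (by positivity)]
    nlinarith [sq_nonneg (oneOneNorm A * linfNorm (lam1 - lam2) - η * l1Norm (x1 - x2))]
  linarith
end

section
/- Let x₁, x₂ ∈ ℝ^n and λ₁, λ₂ ∈ ℝ^m satisfy ∇f(x₁) = −Aᵀλ₁ and ∇f(x₂) = −Aᵀλ₂. Then ‖x₁ − x₂‖_1 ≤ (‖A‖_{1→1} / η) ‖λ₁ − λ₂‖_∞. -/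
open Finset

theorem stmt9 (m n : ℕ) (A : Fin m → Fin n → ℝ)
    (η : ℝ) (hη : 0 < η) (f : (Fin n → ℝ) → ℝ)
    (hdiff : Differentiable ℝ f)
    (hsc : ∀ x x' : Fin n → ℝ,
      f x + fderiv ℝ f x (x' - x) + η / 2 * (l1Norm (x' - x)) ^ 2 ≤ f x')
    (x1 x2 : Fin n → ℝ) (lam1 lam2 : Fin m → ℝ)
    (h1 : ∀ w : Fin n → ℝ, fderiv ℝ f x1 w = -∑ j, (∑ i, A i j * lam1 i) * w j)
    (h2 : ∀ w : Fin n → ℝ, fderiv ℝ f x2 w = -∑ j, (∑ i, A i j * lam2 i) * w j) :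
    l1Norm (x1 - x2) ≤ oneOneNorm A / η * linfNorm (lam1 - lam2) := by
  have hL0 : 0 ≤ l1Norm (x1 - x2) := Finset.sum_nonneg fun i _ => abs_nonneg _
  have hsymm : l1Norm (x2 - x1) = l1Norm (x1 - x2) := by
    unfold l1Norm
    exact Finset.sum_congr rfl fun i _ => by simp only [Pi.sub_apply]; exact abs_sub_comm _ _
  have hl0 : 0 ≤ linfNorm (lam1 - lam2) := Real.iSup_nonneg fun i => abs_nonneg _
  have hA0 : 0 ≤ oneOneNorm A :=
    Real.iSup_nonneg fun j => Finset.sum_nonneg fun i _ => abs_nonneg _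
  have hl : ∀ i, |(lam1 - lam2) i| ≤ linfNorm (lam1 - lam2) := fun i =>
    le_ciSup (f := fun i => |(lam1 - lam2) i|) (Set.finite_range _).bddAbove i
  have hA : ∀ j, ∑ i, |A i j| ≤ oneOneNorm A := fun j =>
    le_ciSup (f := fun j => ∑ i, |A i j|) (Set.finite_range _).bddAbove j
  have e1 := hsc x1 x2
  have e2 := hsc x2 x1
  rw [h1, hsymm] at e1
  rw [h2] at e2
  have key : ∑ j, (∑ i, A i j * lam1 i) * (x2 - x1) j + ∑ j, (∑ i, A i j * lam2 i) * (x1 - x2) j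
      ≤ oneOneNorm A * linfNorm (lam1 - lam2) * l1Norm (x1 - x2) := by
    rw [← Finset.sum_add_distrib, l1Norm, Finset.mul_sum]
    refine Finset.sum_le_sum fun j _ => ?_
    have hj : (∑ i, A i j * lam1 i) * (x2 - x1) j + (∑ i, A i j * lam2 i) * (x1 - x2) j
        = -((∑ i, A i j * (lam1 - lam2) i) * (x1 - x2) j) := by
      simp only [Pi.sub_apply, mul_sub, Finset.sum_sub_distrib]
      ring
    rw [hj]
    refine (neg_le_abs _).trans ?_
    rw [abs_mul]
    refine mul_le_mul_of_nonneg_right ?_ (abs_nonneg _)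
    refine (Finset.abs_sum_le_sum_abs _ _).trans ?_
    refine le_trans ?_ (mul_le_mul_of_nonneg_right (hA j) hl0)
    rw [Finset.sum_mul]
    refine Finset.sum_le_sum fun i _ => ?_
    rw [abs_mul]
    exact mul_le_mul_of_nonneg_left (hl i) (abs_nonneg _)
  have h3 : η * l1Norm (x1 - x2) * l1Norm (x1 - x2)
      ≤ oneOneNorm A * linfNorm (lam1 - lam2) * l1Norm (x1 - x2) := by nlinarith
  rw [div_mul_eq_mul_div, le_div_iff₀ hη]
  rcases hL0.eq_or_lt with h | h
  · rw [← h, zero_mul]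
    exact mul_nonneg hA0 hl0
  · have := le_of_mul_le_mul_right h3 h
    linarith
end

section
/- Let φ : ℝ^m → ℝ be convex and differentiable, δ > 0, and ψ : ℝ^m → ℝ differentiable with Bregman divergence B_ψ(z, z') = ψ(z) − ψ(z') − ⟨∇ψ(z'), z − z'⟩ satisfying B_ψ(z, z') ≥ (1/(2δ))‖z − z'‖_∞² for all z, z'. Let ᾱ ≥ 0, α > 0, M > 0 satisfy δ M α² = ᾱ + α =: ᾱ⁺. Let λ, z ∈ ℝ^m, set μ = (α z + ᾱ λ)/ᾱ⁺, let z⁺ ∈ ℝ^m satisfy ⟨α ∇φ(μ) + ∇ψ(z⁺) − ∇ψ(z), w − z⁺⟩ ≥ 0 for all w ∈ ℝ^m, set λ⁺ = (α z⁺ + ᾱ λ)/ᾱ⁺, and assume φ(λ⁺) − φ(μ) − ⟨∇φ(μ), λ⁺ − μ⟩ ≤ (M/2)‖λ⁺ − μ‖_∞². Then for every w ∈ ℝ^m: ᾱ⁺ φ(λ⁺) − ᾱ φ(λ) ≤ α (φ(μ) + ⟨∇φ(μ), w − μ⟩) + B_ψ(w, z) − B_ψ(w, z⁺). -/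
open Finset

/-- Bregman divergence of a differentiable function ψ on ℝ^m. -/
noncomputable def bregman {m : ℕ} (ψ : (Fin m → ℝ) → ℝ) (z z' : Fin m → ℝ) : ℝ :=
  ψ z - ψ z' - fderiv ℝ ψ z' (z - z')

theorem aux_grad {m : ℕ} (φ : (Fin m → ℝ) → ℝ) (hc : ConvexOn ℝ Set.univ φ)
    (hd : Differentiable ℝ φ) (x y : Fin m → ℝ) : φ x + fderiv ℝ φ x (y - x) ≤ φ y := by
  have h1 : ConvexOn ℝ Set.univ (φ ∘ (AffineMap.lineMap x y : ℝ →ᵃ[ℝ] (Fin m → ℝ))) := by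
    simpa using hc.comp_affineMap (AffineMap.lineMap x y : ℝ →ᵃ[ℝ] (Fin m → ℝ))
  have h2 : HasDerivAt (φ ∘ (AffineMap.lineMap x y : ℝ →ᵃ[ℝ] (Fin m → ℝ)))
      (fderiv ℝ φ x (y - x)) 0 := by
    have h3 : HasFDerivAt φ (fderiv ℝ φ x) ((AffineMap.lineMap x y : ℝ →ᵃ[ℝ] (Fin m → ℝ)) 0) := by
      simpa using (hd x).hasFDerivAt
    exact h3.comp_hasDerivAt 0 AffineMap.hasDerivAt_lineMap
  have h4 := h1.le_slope_of_hasDerivAt (Set.mem_univ 0) (Set.mem_univ 1) one_pos h2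
  simp [slope_def_field] at h4
  simp only [map_sub]
  linarith

theorem aux_norm {m : ℕ} (c : ℝ) (hc : 0 ≤ c) (x : Fin m → ℝ) :
    linfNorm (c • x) = c * linfNorm x := by
  unfold linfNorm
  rw [Real.mul_iSup_of_nonneg hc]
  simp [abs_mul, abs_of_nonneg hc]

theorem stmt10 (m : ℕ) (φ ψ : (Fin m → ℝ) → ℝ)
    (hφconv : ConvexOn ℝ Set.univ φ) (hφdiff : Differentiable ℝ φ)
    (hψdiff : Differentiable ℝ ψ)
    (δ : ℝ) (hδ : 0 < δ)
    (hB : ∀ z z' : Fin m → ℝ,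
      1 / (2 * δ) * (linfNorm (z - z')) ^ 2 ≤ bregman ψ z z')
    (abar α M : ℝ) (habar : 0 ≤ abar) (hα : 0 < α) (hM : 0 < M)
    (hrel : δ * M * α ^ 2 = abar + α)
    (lam z : Fin m → ℝ)
    (μ : Fin m → ℝ) (hμ : μ = fun i => (α * z i + abar * lam i) / (abar + α))
    (zp : Fin m → ℝ)
    (hzp : ∀ w : Fin m → ℝ,
      0 ≤ α * fderiv ℝ φ μ (w - zp) + fderiv ℝ ψ zp (w - zp) - fderiv ℝ ψ z (w - zp))
    (lamp : Fin m → ℝ)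
    (hlamp : lamp = fun i => (α * zp i + abar * lam i) / (abar + α))
    (hline : φ lamp - φ μ - fderiv ℝ φ μ (lamp - μ) ≤ M / 2 * (linfNorm (lamp - μ)) ^ 2) :
    ∀ w : Fin m → ℝ,
      (abar + α) * φ lamp - abar * φ lam ≤
        α * (φ μ + fderiv ℝ φ μ (w - μ)) + bregman ψ w z - bregman ψ w zp := by
  intro w
  have hA : 0 < abar + α := by linarith
  have e1 : lamp - μ = (α / (abar + α)) • (zp - z) := by
    subst hμ hlamp
    ext i
    simp only [Pi.sub_apply, Pi.smul_apply, smul_eq_mul]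
    field_simp
    ring
  have e2 : abar • (lam - μ) = α • (μ - z) := by
    subst hμ
    ext i
    simp only [Pi.sub_apply, Pi.smul_apply, smul_eq_mul]
    field_simp
    ring
  have g := mul_le_mul_of_nonneg_left (aux_grad φ hφconv hφdiff μ lam) habar
  have e3 := congrArg (fderiv ℝ φ μ) e2
  rw [e1, aux_norm _ (by positivity), map_smul] at hline
  have hb := hB zp z
  have hl := mul_le_mul_of_nonneg_left hline hA.le
  have e4 : (abar + α) * (M / 2 * (α / (abar + α) * linfNorm (zp - z)) ^ 2)
      = 1 / (2 * δ) * linfNorm (zp - z) ^ 2 := by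
    rw [← hrel]
    field_simp
  have e5 : (abar + α) * (α / (abar + α) * fderiv ℝ φ μ (zp - z))
      = α * fderiv ℝ φ μ (zp - z) := by
    field_simp
  rw [e4, smul_eq_mul, mul_sub, e5] at hl
  have hz := hzp w
  unfold bregman at *
  simp only [map_sub, map_smul, smul_eq_mul] at *
  linarith
end

section
/- Let φ : ℝ^m → ℝ be convex and differentiable, δ > 0, and ψ : ℝ^m → ℝ differentiable with Bregman divergence B_ψ(z, z') = ψ(z) − ψ(z') − ⟨∇ψ(z'), z − z'⟩ satisfying (1/(2δ))‖z − z'‖_∞² ≤ B_ψ(z, z') ≤ (1/2)‖z − z'‖_∞² for all z, z'. Consider sequences (α^j)_{j≥1}, (ᾱ^j)_{j≥0}, (M^j)_{j≥0}, (z^j)_{j≥0}, (μ^j)_{j≥1}, (λ^j)_{j≥0} with ᾱ^0 = 0, z^0 = λ^0 = 0, and for each j ≥ 1: α^j > 0, M^{j−1} > 0, ᾱ^j = ᾱ^{j−1} + α^j, δ M^{j−1} (α^j)² = ᾱ^j, μ^j = (α^j z^{j−1} + ᾱ^{j−1} λ^{j−1})/ᾱ^j, ⟨α^j ∇φ(μ^j)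 + ∇ψ(z^j) − ∇ψ(z^{j−1}), w − z^j⟩ ≥ 0 for all w ∈ ℝ^m, λ^j = (α^j z^j + ᾱ^{j−1} λ^{j−1})/ᾱ^j, and φ(λ^j) − φ(μ^j) − ⟨∇φ(μ^j), λ^j − μ^j⟩ ≤ (M^{j−1}/2)‖λ^j − μ^j‖_∞². Then for every t ≥ 1 and every z ∈ ℝ^m: ᾱ^t φ(λ^t) ≤ Σ_{j=1}^t α^j (φ(μ^j) + ⟨∇φ(μ^j), z − μ^j⟩) + ‖z‖_∞². -/
open Finset

theorem linf_smul {k : ℕ} (c : ℝ) (hc : 0 ≤ c) (x : Fin k → ℝ) :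
    linfNorm (c • x) = c * linfNorm x := by
  unfold linfNorm
  rw [Real.mul_iSup_of_nonneg hc]
  simp [abs_mul, abs_of_nonneg hc]

theorem linf_nonneg {k : ℕ} (x : Fin k → ℝ) : 0 ≤ linfNorm x :=
  Real.iSup_nonneg fun _ => abs_nonneg _

theorem conv_grad {m : ℕ} {φ : (Fin m → ℝ) → ℝ}
    (hc : ConvexOn ℝ Set.univ φ) (hd : Differentiable ℝ φ) (x y : Fin m → ℝ) :
    φ x + fderiv ℝ φ x (y - x) ≤ φ y := by
  have h1 : ConvexOn ℝ Set.univ (φ ∘ AffineMap.lineMap (k := ℝ) x y) := by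
    simpa using hc.comp_affineMap (AffineMap.lineMap (k := ℝ) x y)
  have h2 : HasDerivAt (φ ∘ AffineMap.lineMap (k := ℝ) x y) (fderiv ℝ φ x (y - x)) 0 := by
    have e : HasDerivAt (AffineMap.lineMap (k := ℝ) x y) (y - x) (0:ℝ) :=
      AffineMap.hasDerivAt_lineMap
    have hx : HasFDerivAt φ (fderiv ℝ φ x) (AffineMap.lineMap x y (0:ℝ)) := by
      simpa using (hd x).hasFDerivAt
    exact hx.comp_hasDerivAt _ e
  have h3 := h1.le_slope_of_hasDerivAt (Set.mem_univ 0) (Set.mem_univ 1) one_pos h2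
  simp [slope_def_field] at h3
  simp only [map_sub]
  linarith

theorem stmt11 (m : ℕ) (φ ψ : (Fin m → ℝ) → ℝ)
    (hφconv : ConvexOn ℝ Set.univ φ) (hφdiff : Differentiable ℝ φ)
    (hψdiff : Differentiable ℝ ψ)
    (δ : ℝ) (hδ : 0 < δ)
    (hBlow : ∀ z z' : Fin m → ℝ,
      1 / (2 * δ) * (linfNorm (z - z')) ^ 2 ≤ bregman ψ z z')
    (hBup : ∀ z z' : Fin m → ℝ,
      bregman ψ z z' ≤ 1 / 2 * (linfNorm (z - z')) ^ 2)
    (α abar M : ℕ → ℝ) (z lam μ : ℕ → Fin m → ℝ)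
    (habar0 : abar 0 = 0) (hz0 : z 0 = 0) (hlam0 : lam 0 = 0)
    (hαpos : ∀ j : ℕ, 1 ≤ j → 0 < α j)
    (hMpos : ∀ j : ℕ, 1 ≤ j → 0 < M (j - 1))
    (habar : ∀ j : ℕ, 1 ≤ j → abar j = abar (j - 1) + α j)
    (hrel : ∀ j : ℕ, 1 ≤ j → δ * M (j - 1) * (α j) ^ 2 = abar j)
    (hμ : ∀ j : ℕ, 1 ≤ j →
      μ j = fun i => (α j * z (j - 1) i + abar (j - 1) * lam (j - 1) i) / abar j)
    (hmdopt : ∀ j : ℕ, 1 ≤ j → ∀ w : Fin m → ℝ,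
      0 ≤ α j * fderiv ℝ φ (μ j) (w - z j) + fderiv ℝ ψ (z j) (w - z j) -
        fderiv ℝ ψ (z (j - 1)) (w - z j))
    (hlam : ∀ j : ℕ, 1 ≤ j →
      lam j = fun i => (α j * z j i + abar (j - 1) * lam (j - 1) i) / abar j)
    (hline : ∀ j : ℕ, 1 ≤ j →
      φ (lam j) - φ (μ j) - fderiv ℝ φ (μ j) (lam j - μ j) ≤
        M (j - 1) / 2 * (linfNorm (lam j - μ j)) ^ 2) :
    ∀ t : ℕ, 1 ≤ t → ∀ zz : Fin m → ℝ,
      abar t * φ (lam t) ≤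
        (∑ j ∈ Finset.Icc 1 t, α j * (φ (μ j) + fderiv ℝ φ (μ j) (zz - μ j))) +
          (linfNorm zz) ^ 2 := by
  have hpos : ∀ j, 0 ≤ abar j := by
    intro j
    induction j with
    | zero => rw [habar0]
    | succ n ih =>
      have := habar (n+1) (by omega)
      have := hαpos (n+1) (by omega)
      simp only [Nat.add_sub_cancel] at *
      linarith
  have key : ∀ t : ℕ, ∀ zz : Fin m → ℝ, abar t * φ (lam t) + bregman ψ zz (z t) ≤
        (∑ j ∈ Finset.Icc 1 t, α j * (φ (μ j) + fderiv ℝ φ (μ j) (zz - μ j))) +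
          bregman ψ zz (z 0) := by
    intro t zz
    induction t with
    | zero => simp [habar0]
    | succ n ih =>
      rw [Finset.sum_Icc_succ_top (by omega)]
      have ha := hαpos (n+1) (by omega)
      have hA := habar (n+1) (by omega)
      have hr := hrel (n+1) (by omega)
      have hm := hμ (n+1) (by omega)
      have ho := hmdopt (n+1) (by omega) zz
      have hl := hlam (n+1) (by omega)
      have hli := hline (n+1) (by omega)
      have hp := hpos n
      have hB := hBlow (z (n+1)) (z n)
      simp only [Nat.add_sub_cancel] at hA hr hm ho hl hli
      have hc := conv_grad hφconv hφdiff (μ (n+1)) (lam n)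
      have hApos : 0 < abar (n+1) := by linarith
      have hd : lam (n+1) - μ (n+1) = (α (n+1) / abar (n+1)) • (z (n+1) - z n) := by
        rw [hm, hl]; ext i
        simp only [Pi.sub_apply, Pi.smul_apply, smul_eq_mul]
        field_simp
        ring
      have he : abar (n+1) • (lam (n+1) - μ (n+1)) =
          α (n+1) • (z (n+1) - μ (n+1)) + abar n • (lam n - μ (n+1)) := by
        have : abar (n+1) • lam (n+1) = α (n+1) • z (n+1) + abar n • lam n := by
          rw [hl]; ext i
          simp only [Pi.add_apply, Pi.smul_apply, smul_eq_mul]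
          field_simp
        rw [smul_sub, this, hA]
        module
      have he2 := congrArg (fderiv ℝ φ (μ (n+1))) he
      rw [map_add, map_smul, map_smul, map_smul] at he2
      simp only [smul_eq_mul] at he2
      have hq : abar (n+1) * (M n / 2 * (linfNorm (lam (n+1) - μ (n+1))) ^ 2) =
          1 / (2 * δ) * (linfNorm (z (n+1) - z n)) ^ 2 := by
        rw [hd, linf_smul _ (by positivity)]
        have : abar (n+1) * (M n / 2 * (α (n+1) / abar (n+1)) ^ 2) = 1 / (2 * δ) := by
          field_simp
          linarith
        rw [← this]; ring
      have h1 := mul_le_mul_of_nonneg_left hli hApos.le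
      rw [hq] at h1
      have h2 := mul_le_mul_of_nonneg_left hc hp
      unfold bregman at *
      simp only [map_sub] at *
      rw [hA] at *
      linarith
  intro t _ zz
  have h1 := key t zz
  have h2 := hBup zz (z 0)
  have h3 := hBlow zz (z t)
  have h4 : 0 ≤ 1 / (2 * δ) * (linfNorm (zz - z t)) ^ 2 := by positivity
  rw [hz0, sub_zero] at h2
  rw [hz0] at h1
  have := sq_nonneg (linfNorm zz)
  linarith
end

section
/- Let δ > 0, L > 0, η > 0, and let (M^t)_{t≥0} be a sequence of reals with 0 < M^t ≤ 2L/η for all t. Define ᾱ^0 = 0 and ᾱ^{t+1} = ᾱ^t + (1 + √(1 + 4 δ M^t ᾱ^t)) / (2 δ M^t) for t ≥ 0. Then ᾱ^t ≥ η (t+1)² / (8 δ L) for all t ≥ 1. -/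
theorem stmt12 (δ L η : ℝ) (hδ : 0 < δ) (hL : 0 < L) (hη : 0 < η)
    (M : ℕ → ℝ) (hM : ∀ t : ℕ, 0 < M t ∧ M t ≤ 2 * L / η)
    (abar : ℕ → ℝ) (habar0 : abar 0 = 0)
    (habar : ∀ t : ℕ,
      abar (t + 1) = abar t + (1 + Real.sqrt (1 + 4 * δ * M t * abar t)) / (2 * δ * M t)) :
    ∀ t : ℕ, 1 ≤ t → η * ((t : ℝ) + 1) ^ 2 / (8 * δ * L) ≤ abar t := by
  obtain ⟨c, hc⟩ : ∃ c, c = η / (2 * δ * L) := ⟨_, rfl⟩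
  have hc0 : 0 < c := by rw [hc]; positivity
  have hmc : ∀ t, δ * M t * c ≤ 1 := by
    intro t
    have h := (hM t).2
    rw [le_div_iff₀ hη] at h
    have e : δ * M t * c = (M t * η) / (2 * L) := by rw [hc]; field_simp
    rw [e, div_le_one (by positivity)]
    exact h
  intro t ht
  have e : η * ((t : ℝ) + 1) ^ 2 / (8 * δ * L) = c * ((t : ℝ) + 1) ^ 2 / 4 := by
    rw [hc]; field_simp; norm_num
  rw [e]
  clear e
  induction t, ht using Nat.le_induction with
  | base =>
    have h := habar 0
    have hm : 0 < δ * M 0 := mul_pos hδ (hM 0).1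
    have hk := hmc 0
    simp only [habar0, mul_zero, add_zero, Real.sqrt_one, zero_add] at h
    rw [h, le_div_iff₀ (by nlinarith)]
    push_cast
    nlinarith
  | succ n hn ih =>
    have hm : 0 < δ * M n := mul_pos hδ (hM n).1
    have hk := hmc n
    have h := habar n
    generalize hmm : δ * M n = m at *
    have e1 : 4 * δ * M n * abar n = 4 * (m * abar n) := by rw [← hmm]; ring
    have e2 : 2 * δ * M n = 2 * m := by rw [← hmm]; ring
    rw [e1, e2] at h
    have hs : m * c * ((n : ℝ) + 1) ≤ Real.sqrt (1 + 4 * (m * abar n)) := by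
      apply Real.le_sqrt_of_sq_le
      have h1 : m * (c * ((n : ℝ) + 1) ^ 2 / 4) ≤ m * abar n :=
        mul_le_mul_of_nonneg_left ih hm.le
      have h2 : (m * c) * ((m * c) * ((n : ℝ) + 1) ^ 2) ≤ 1 * ((m * c) * ((n : ℝ) + 1) ^ 2) :=
        mul_le_mul_of_nonneg_right hk (by positivity)
      nlinarith
    have hi : c * ((n : ℝ) + 2) / 2 ≤ (1 + Real.sqrt (1 + 4 * (m * abar n))) / (2 * m) := by
      rw [le_div_iff₀ (by positivity)]
      nlinarith
    rw [h]
    push_cast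
    nlinarith
end

section
/- Let A be a real m×n matrix, b ∈ ℝ^m, f : ℝ^n → ℝ convex, and φ(λ) = ⟨λ, b⟩ + sup_{x ∈ ℝ^n} (−f(x) − ⟨Aᵀλ, x⟩). Let t ≥ 1, let α_1, …, α_t > 0 with ᾱ = Σ_{j=1}^t α_j, let μ_1, …, μ_t ∈ ℝ^m and x_1, …, x_t ∈ ℝ^n be such that for each j the point x_j attains the supremum defining φ(μ_j), so that φ(μ_j) = ⟨μ_j, b − A x_j⟩ − f(x_j). Suppose λ̄ ∈ ℝ^m satisfies ᾱ φ(λ̄) ≤ Σ_{j=1}^t α_j (φ(μ_j) + ⟨b − A x_j, z − μ_j⟩) + ‖z‖_∞² for every z ∈ ℝ^m, set x̄ = ᾱ^{-1} Σ_{j=1}^t α_j x_j, and suppose there exists λ* ∈ ℝ^m with ‖λ*‖_∞ ≤ R̂ (R̂ > 0), φ(λ*) finite, and φ(λ̄) ≥ φ(λ*). Then ‖A x̄ − b‖_1 ≤ 4 R̂ / ᾱ. -/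
open Finset

theorem stmt14 (m n : ℕ) (A : Fin m → Fin n → ℝ) (b : Fin m → ℝ)
    (f : (Fin n → ℝ) → ℝ) (hf : ConvexOn ℝ Set.univ f)
    (φ : (Fin m → ℝ) → ℝ)
    (hφ : ∀ lam : Fin m → ℝ,
      IsLUB (Set.range fun y : Fin n → ℝ =>
        -f y - ∑ j, (∑ i, A i j * lam i) * y j) (φ lam - ∑ i, lam i * b i))
    (t : ℕ) (ht : 1 ≤ t)
    (α : Fin t → ℝ) (hα : ∀ j, 0 < α j)
    (abar : ℝ) (habar : abar = ∑ j, α j)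
    (μ : Fin t → Fin m → ℝ) (x : Fin t → Fin n → ℝ)
    (hatt : ∀ j : Fin t,
      φ (μ j) = (∑ i, μ j i * (b i - ∑ k, A i k * x j k)) - f (x j))
    (lambar : Fin m → ℝ)
    (hlambar : ∀ z : Fin m → ℝ,
      abar * φ lambar ≤
        (∑ j, α j * (φ (μ j) + ∑ i, (b i - ∑ k, A i k * x j k) * (z i - μ j i))) +
          (linfNorm z) ^ 2)
    (xbar : Fin n → ℝ) (hxbar : xbar = fun k => (∑ j, α j * x j k) / abar)
    (Rhat : ℝ) (hRhat : 0 < Rhat)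
    (lamstar : Fin m → ℝ) (hls : linfNorm lamstar ≤ Rhat)
    (hge : φ lamstar ≤ φ lambar) :
    l1Norm (fun i => (∑ k, A i k * xbar k) - b i) ≤ 4 * Rhat / abar := by
  have hpos : 0 < abar := by
    rw [habar]
    have : Nonempty (Fin t) := ⟨⟨0, ht⟩⟩
    exact Finset.sum_pos (fun j _ => hα j) Finset.univ_nonempty
  have hx : ∀ k, abar * xbar k = ∑ j, α j * x j k := by
    intro k
    rw [hxbar]
    field_simp
  -- Jensen
  have hJ : abar * f xbar ≤ ∑ j, α j * f (x j) := by
    have h := hf.map_sum_le (t := Finset.univ) (w := fun j => α j / abar) (p := x)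
      (fun j _ => (div_pos (hα j) hpos).le)
      (by rw [← Finset.sum_div, ← habar]; exact div_self hpos.ne') (fun _ _ => Set.mem_univ _)
    have e : ∑ j, (α j / abar) • x j = xbar := by
      rw [hxbar]
      funext k
      simp only [Finset.sum_apply, Pi.smul_apply, smul_eq_mul, Finset.sum_div]
      exact Finset.sum_congr rfl fun j _ => by ring
    rw [e] at h
    have h2 := mul_le_mul_of_nonneg_left h hpos.le
    refine h2.trans (le_of_eq ?_)
    rw [Finset.mul_sum]
    refine Finset.sum_congr rfl fun j _ => ?_
    simp only [smul_eq_mul]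
    field_simp
  obtain ⟨G, hG⟩ : ∃ G : Fin m → ℝ, G = fun i => b i - ∑ k, A i k * xbar k := ⟨_, rfl⟩
  have hGi : ∀ i, abar * G i = ∑ j, α j * (b i - ∑ k, A i k * x j k) := by
    intro i
    have e1 : abar * ∑ k, A i k * xbar k = ∑ j, α j * ∑ k, A i k * x j k := by
      simp only [Finset.mul_sum]
      rw [Finset.sum_comm]
      refine Finset.sum_congr rfl fun k _ => ?_
      rw [mul_left_comm, hx, Finset.mul_sum]
      exact Finset.sum_congr rfl fun j _ => by ring
    simp only [hG, mul_sub, Finset.sum_sub_distrib]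
    rw [e1, ← Finset.sum_mul, ← habar]
  have hstar : (∑ i, lamstar i * G i) - f xbar ≤ φ lamstar := by
    have h := (hφ lamstar).1 ⟨xbar, rfl⟩
    have e : ∑ j, (∑ i, A i j * lamstar i) * xbar j
        = ∑ i, lamstar i * ∑ k, A i k * xbar k := by
      simp only [Finset.mul_sum, Finset.sum_mul]
      rw [Finset.sum_comm]
      exact Finset.sum_congr rfl fun i _ => Finset.sum_congr rfl fun j _ => by ring
    simp only [e] at h
    simp only [hG, mul_sub, Finset.sum_sub_distrib]
    linarith
  have hkey : ∀ z : Fin m → ℝ,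
      abar * ∑ i, lamstar i * G i ≤ abar * (∑ i, z i * G i) + (linfNorm z) ^ 2 := by
    intro z
    have h := hlambar z
    have e : (∑ j, α j * (φ (μ j) + ∑ i, (b i - ∑ k, A i k * x j k) * (z i - μ j i)))
        = abar * (∑ i, z i * G i) - ∑ j, α j * f (x j) := by
      have e2 : abar * (∑ i, z i * G i)
          = ∑ j, α j * ∑ i, z i * (b i - ∑ k, A i k * x j k) := by
        rw [Finset.mul_sum]
        simp only [mul_left_comm abar, hGi]
        simp only [Finset.mul_sum (s := (Finset.univ : Finset (Fin m)))]
        rw [Finset.sum_comm]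
        refine Finset.sum_congr rfl fun i _ => ?_
        rw [Finset.mul_sum]
        exact Finset.sum_congr rfl fun j _ => by ring
      rw [e2, ← Finset.sum_sub_distrib]
      refine Finset.sum_congr rfl fun j _ => ?_
      rw [hatt j]
      have e3 : ∑ i, (b i - ∑ k, A i k * x j k) * (z i - μ j i)
          = ∑ i, z i * (b i - ∑ k, A i k * x j k)
            - ∑ i, μ j i * (b i - ∑ k, A i k * x j k) := by
        rw [← Finset.sum_sub_distrib]
        exact Finset.sum_congr rfl fun i _ => by ring
      rw [e3]
      ring
    rw [e] at h
    have h3 := mul_le_mul_of_nonneg_left (hstar.trans hge) hpos.le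
    rw [mul_sub] at h3
    linarith
  have hlow : -(Rhat * ∑ i, |G i|) ≤ ∑ i, lamstar i * G i := by
    rw [Finset.mul_sum, ← Finset.sum_neg_distrib]
    refine Finset.sum_le_sum fun i _ => ?_
    have h1 : |lamstar i| ≤ Rhat :=
      (le_ciSup (f := fun i => |lamstar i|) (Set.finite_range _).bddAbove i).trans hls
    have h2 := neg_abs_le (lamstar i * G i)
    rw [abs_mul] at h2
    have h3 := mul_le_mul_of_nonneg_right h1 (abs_nonneg (G i))
    linarith
  have hz := hkey (fun i => if 0 ≤ G i then -(2 * Rhat) else 2 * Rhat)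
  have hz1 : ∑ i, (if 0 ≤ G i then -(2 * Rhat) else 2 * Rhat) * G i
      = -(2 * Rhat * ∑ i, |G i|) := by
    rw [Finset.mul_sum, ← Finset.sum_neg_distrib]
    refine Finset.sum_congr rfl fun i _ => ?_
    split_ifs with h
    · rw [abs_of_nonneg h]; ring
    · rw [abs_of_neg (not_le.mp h)]; ring
  have hz2 : (linfNorm (fun i => if 0 ≤ G i then -(2 * Rhat) else 2 * Rhat)) ^ 2
      ≤ (2 * Rhat) ^ 2 := by
    refine pow_le_pow_left₀ (Real.iSup_nonneg fun i => abs_nonneg _) ?_ 2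
    refine Real.iSup_le (fun i => ?_) (by positivity)
    split_ifs
    · rw [abs_neg, abs_of_pos (by positivity)]
    · rw [abs_of_pos (by positivity)]
  rw [hz1] at hz
  have hL : l1Norm (fun i => (∑ k, A i k * xbar k) - b i) = ∑ i, |G i| := by
    simp only [l1Norm, hG]
    exact Finset.sum_congr rfl fun i _ => abs_sub_comm _ _
  rw [hL, le_div_iff₀ hpos]
  have h5 := mul_le_mul_of_nonneg_left hlow hpos.le
  have h6 : Rhat * ((∑ i, |G i|) * abar) ≤ Rhat * (4 * Rhat) := by nlinarith
  exact le_of_mul_le_mul_left h6 hRhat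
end

section
/- Let n ≥ 2 be an integer, ε ∈ (0,1), and η = ε/(4 log n). Define φ̃ : ℝ^n × ℝ^n → ℝ by φ̃(α, β) = η Σ_{i,j=1}^n exp(−(1 − α_i − β_j)/η − 1) − (1/n) Σ_{i=1}^n α_i − (1/n) Σ_{j=1}^n β_j (this is the dual regularized OT objective with cost matrix C = 1_n 1_nᵀ and marginals r = c = (1/n) 1_n). Then every global minimizer (α*, β*) of φ̃ satisfies √(Σ_{i=1}^n (α*_i)² + Σ_{i=1}^n (β*_i)²) ≥ √(n/2) · (1 + ε/(4 log n) − ε/2). -/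
open Finset

/-- The dual regularized OT objective with cost matrix 1ₙ1ₙᵀ and marginals r = c = (1/n)1ₙ. -/
noncomputable def phiTilde (n : ℕ) (η : ℝ) (a b : Fin n → ℝ) : ℝ :=
  η * ∑ i, ∑ j, Real.exp (-(1 - a i - b j) / η - 1) -
    (1 / (n : ℝ)) * ∑ i, a i - (1 / (n : ℝ)) * ∑ j, b j

theorem stmt16 (n : ℕ) (hn : 2 ≤ n) (ε : ℝ) (hε : ε ∈ Set.Ioo (0 : ℝ) 1)
    (η : ℝ) (hη : η = ε / (4 * Real.log (n : ℝ)))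
    (as bs : Fin n → ℝ)
    (hmin : ∀ a b : Fin n → ℝ, phiTilde n η as bs ≤ phiTilde n η a b) :
    Real.sqrt ((n : ℝ) / 2) * (1 + ε / (4 * Real.log (n : ℝ)) - ε / 2) ≤
      Real.sqrt ((∑ i, (as i) ^ 2) + (∑ i, (bs i) ^ 2)) := by
  obtain ⟨h0, h1⟩ := hε
  have hn2 : (2:ℝ) ≤ n := by exact_mod_cast hn
  have hnpos : (0:ℝ) < n := by linarith
  have hL : 0 < Real.log (n:ℝ) := Real.log_pos (by linarith)
  have hηpos : 0 < η := by rw [hη]; positivity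
  have hεη : ε = 4 * η * Real.log (n:ℝ) := by rw [hη]; field_simp
  rw [← hη]
  obtain ⟨E, hE⟩ : ∃ E, E = ∑ i, ∑ j, Real.exp (-(1 - as i - bs j) / η - 1) := ⟨_, rfl⟩
  have hEpos : 0 < E := by
    rw [hE]
    haveI : Nonempty (Fin n) := ⟨⟨0, by omega⟩⟩
    exact Finset.sum_pos (fun i _ => Finset.sum_pos (fun j _ => Real.exp_pos _)
      Finset.univ_nonempty) Finset.univ_nonempty
  have hE1 : E = 1 := by
    by_contra hne
    have hlt := Real.log_lt_sub_one_of_pos hEpos hne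
    have h := hmin (fun i => as i - η * Real.log E) bs
    have e : ∑ i, ∑ j, Real.exp (-(1 - (as i - η * Real.log E) - bs j) / η - 1) = 1 := by
      have : ∀ i j, Real.exp (-(1 - (as i - η * Real.log E) - bs j) / η - 1)
          = Real.exp (-(1 - as i - bs j) / η - 1) * E⁻¹ := by
        intro i j
        rw [← Real.exp_log (inv_pos.2 hEpos), ← Real.exp_add, Real.log_inv]
        congr 1
        field_simp
        ring
      simp_rw [this, ← Finset.sum_mul]
      rw [← hE]
      exact mul_inv_cancel₀ hEpos.ne'
    unfold phiTilde at h
    rw [e, ← hE, Finset.sum_sub_distrib] at h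
    simp only [Finset.sum_const, Finset.card_univ, Fintype.card_fin, nsmul_eq_mul] at h
    have e2 : 1 / (n:ℝ) * (∑ i, as i - n * (η * Real.log E))
        = 1 / (n:ℝ) * ∑ i, as i - η * Real.log E := by field_simp
    rw [e2] at h
    nlinarith
  obtain ⟨K, hK⟩ : ∃ K, K = 1 + η - ε / 2 := ⟨_, rfl⟩
  have hKpos : 0 < K := by rw [hK]; linarith
  have hS : n * K ≤ ∑ i, as i + ∑ i, bs i := by
    have h := hmin (fun _ => K / 2) (fun _ => K / 2)
    unfold phiTilde at h
    rw [← hE, hE1] at h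
    simp only [Finset.sum_const, Finset.card_univ, Fintype.card_fin, nsmul_eq_mul] at h
    have e : Real.exp (-(1 - K / 2 - K / 2) / η - 1) = ((n:ℝ) * n)⁻¹ := by
      rw [← Real.exp_log (show (0:ℝ) < ((n:ℝ) * n)⁻¹ by positivity), Real.log_inv,
        Real.log_mul hnpos.ne' hnpos.ne', hK, hεη]
      congr 1
      field_simp
      ring
    rw [e] at h
    have e2 : η * ((n:ℝ) * (n * ((n:ℝ) * n)⁻¹)) - 1 / (n:ℝ) * (n * (K / 2))
        - 1 / (n:ℝ) * (n * (K / 2)) = η - K := by field_simp; ring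
    rw [e2] at h
    have h3 : K ≤ (∑ i, as i + ∑ i, bs i) / n := by
      have : (∑ i, as i + ∑ i, bs i) / n = 1 / (n:ℝ) * ∑ i, as i + 1 / (n:ℝ) * ∑ i, bs i := by
        ring
      rw [this]; linarith
    rw [le_div_iff₀ hnpos] at h3
    linarith
  rw [← hK]
  apply Real.le_sqrt_of_sq_le
  rw [mul_pow, Real.sq_sqrt (by positivity)]
  have ca := sq_sum_le_card_mul_sum_sq (s := Finset.univ) (f := as)
  have cb := sq_sum_le_card_mul_sum_sq (s := Finset.univ) (f := bs)
  simp only [Finset.card_univ, Fintype.card_fin] at ca cb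
  have hsq : (n * K) ^ 2 ≤ (∑ i, as i + ∑ i, bs i) ^ 2 :=
    pow_le_pow_left₀ (by positivity) hS 2
  have h4 : (n:ℝ) * (n / 2 * K ^ 2) ≤ n * (∑ i, as i ^ 2 + ∑ i, bs i ^ 2) := by
    nlinarith [sq_nonneg (∑ i, as i - ∑ i, bs i)]
  exact le_of_mul_le_mul_left h4 hnpos
end

section
/- Let n ≥ 2 be an integer, ε ∈ (0,1), and η = ε/(4 log n). Define φ̃ : ℝ^n × ℝ^n → ℝ by φ̃(α, β) = η Σ_{i,j=1}^n exp(−(1 − α_i − β_j)/η − 1) − (1/n) Σ_{i=1}^n α_i − (1/n) Σ_{j=1}^n β_j. Then every global minimizer (α*, β*) of φ̃ satisfies α*_i = α*_j and β*_i = β*_j for all indices i, j, and moreover α*_i + β*_i = 1 + ε/(4 log n) − ε/2 for every i. -/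
open Finset

theorem phi_aux (n : ℕ) (hn : 2 ≤ n) (η s : ℝ) (hη : 0 < η)
    (hs : s = 1 + η - 2 * η * Real.log n) (a b : Fin n → ℝ) :
    phiTilde n η a b = ∑ i, ∑ j, (η / (n:ℝ)^2 *
      (Real.exp ((a i + b j - s) / η) - 1 - (a i + b j - s) / η)) + (η - s) := by
  have hn0 : (0:ℝ) < n := by exact_mod_cast (by omega : 0 < n)
  have key : ∀ i j, η / (n:ℝ)^2 *
      (Real.exp ((a i + b j - s) / η) - 1 - (a i + b j - s) / η)
      = η * Real.exp (-(1 - a i - b j) / η - 1) - (1 / (n:ℝ)^2) * a i - (1 / (n:ℝ)^2) * b j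
        - (η - s) / (n:ℝ)^2 := by
    intro i j
    have h1 : (a i + b j - s) / η = (-(1 - a i - b j) / η - 1) + (Real.log n + Real.log n) := by
      rw [hs]; field_simp; ring
    have h2 : Real.exp ((a i + b j - s) / η)
        = Real.exp (-(1 - a i - b j) / η - 1) * (n * n) := by
      rw [h1, Real.exp_add _ (_ + _), Real.exp_add (Real.log n), Real.exp_log hn0]
    rw [h2]
    generalize Real.exp (-(1 - a i - b j) / η - 1) = E
    field_simp
    ring
  simp only [key, Finset.sum_sub_distrib, ← Finset.mul_sum, Finset.sum_const, Finset.card_univ,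
    Fintype.card_fin, nsmul_eq_mul, phiTilde]
  field_simp
  ring

theorem stmt17 (n : ℕ) (hn : 2 ≤ n) (ε : ℝ) (hε : ε ∈ Set.Ioo (0 : ℝ) 1)
    (η : ℝ) (hη : η = ε / (4 * Real.log (n : ℝ)))
    (as bs : Fin n → ℝ)
    (hmin : ∀ a b : Fin n → ℝ, phiTilde n η as bs ≤ phiTilde n η a b) :
    (∀ i j : Fin n, as i = as j) ∧ (∀ i j : Fin n, bs i = bs j) ∧
      (∀ i : Fin n, as i + bs i = 1 + ε / (4 * Real.log (n : ℝ)) - ε / 2) := by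
  have hn1 : (1:ℝ) < n := by exact_mod_cast (by omega : 1 < n)
  have hl : 0 < Real.log n := Real.log_pos hn1
  have hη0 : 0 < η := by rw [hη]; exact div_pos hε.1 (by positivity)
  obtain ⟨s, hs⟩ : ∃ s, s = 1 + η - 2 * η * Real.log n := ⟨_, rfl⟩
  have hs' : s = 1 + ε / (4 * Real.log (n : ℝ)) - ε / 2 := by
    rw [hs, hη]; field_simp; ring
  have h := hmin (fun _ => s) (fun _ => 0)
  rw [phi_aux n hn η s hη0 hs, phi_aux n hn η s hη0 hs] at h
  simp only [add_zero, sub_self, zero_div, Real.exp_zero, mul_zero, Finset.sum_const_zero] at h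
  have hc : 0 < η / (n:ℝ)^2 := by positivity
  have hnn : ∀ i j, 0 ≤ η / (n:ℝ)^2 *
      (Real.exp ((as i + bs j - s) / η) - 1 - (as i + bs j - s) / η) := by
    intro i j
    have := Real.add_one_le_exp ((as i + bs j - s) / η)
    exact mul_nonneg hc.le (by linarith)
  have hz := le_antisymm (by linarith) (Finset.sum_nonneg fun i _ =>
    Finset.sum_nonneg fun j _ => hnn i j)
  have all : ∀ i j, as i + bs j = s := by
    intro i j
    have h1 := (Finset.sum_eq_zero_iff_of_nonneg (fun i _ =>
      Finset.sum_nonneg fun j _ => hnn i j)).1 hz i (Finset.mem_univ _)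
    have h2 := (Finset.sum_eq_zero_iff_of_nonneg (fun j _ => hnn i j)).1 h1 j (Finset.mem_univ _)
    by_contra hne
    have hd : (as i + bs j - s) / η ≠ 0 := div_ne_zero (sub_ne_zero.2 hne) hη0.ne'
    have := Real.add_one_lt_exp hd
    have := mul_pos hc (show 0 < Real.exp ((as i + bs j - s) / η) - 1 - (as i + bs j - s) / η by
      linarith)
    linarith
  refine ⟨fun i j => ?_, fun i j => ?_, fun i => ?_⟩
  · linarith [all i i, all j i]
  · linarith [all i i, all i j]
  · rw [all i i, hs']
end

section
/- Define the log-sum-exp dual φ : ℝ^n × ℝ^n → ℝ by φ(α, β) = η log(Σ_{i,j=1}^n exp(−(C_{ij} − α_i − β_j)/η − 1)) − ⟨α, r⟩ − ⟨β, c⟩ − 1. Then there exists a global minimizer (α*, β*) of φ such that ‖α*‖_∞ ≤ η (R + 1/2) and ‖β*‖_∞ ≤ η (R + 1/2), where R = η^{-1}‖C‖_∞ + log n − 2 log(min_{1≤i,j≤n}{r_i, c_j}). -/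
open Finset

/-- The log-sum-exp dual objective
φ(α,β) = η log(Σ_{ij} exp(−(C_ij − α_i − β_j)/η − 1)) − ⟨α,r⟩ − ⟨β,c⟩ − 1. -/
noncomputable def phiLog {n : ℕ} (η : ℝ) (C : Fin n → Fin n → ℝ) (r c : Fin n → ℝ)
    (a b : Fin n → ℝ) : ℝ :=
  η * Real.log (∑ i, ∑ j, Real.exp (-(C i j - a i - b j) / η - 1)) -
    (∑ i, a i * r i) - (∑ j, b j * c j) - 1

theorem core_aux {n : ℕ} (η : ℝ) (hη : 0 < η) (w r : Fin n → ℝ) (hw : ∀ i, 0 < w i)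
    (hr : ∀ i, 0 < r i) (hr1 : ∑ i, r i = 1) (a : Fin n → ℝ) (s : ℝ) :
    η * Real.log (∑ i, w i * Real.exp ((η * (Real.log (r i / w i) - s)) / η))
      - ∑ i, (η * (Real.log (r i / w i) - s)) * r i
    ≤ η * Real.log (∑ i, w i * Real.exp (a i / η)) - ∑ i, a i * r i := by
  have h1 : ∑ i, w i * Real.exp ((η * (Real.log (r i / w i) - s)) / η) = Real.exp (-s) := by
    have : ∀ i, w i * Real.exp ((η * (Real.log (r i / w i) - s)) / η) = r i * Real.exp (-s) := by
      intro i
      have := hw i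
      rw [mul_div_cancel_left₀ _ hη.ne', sub_eq_add_neg, Real.exp_add,
        Real.exp_log (div_pos (hr i) (hw i))]
      field_simp
    rw [Finset.sum_congr rfl (fun i _ => this i), ← Finset.sum_mul, hr1, one_mul]
  have h2 := strictConcaveOn_log_Ioi.concaveOn.le_map_sum (t := Finset.univ) (w := r)
    (p := fun i => w i * Real.exp (a i / η) / r i) (fun i _ => (hr i).le) hr1
    (fun i _ => div_pos (mul_pos (hw i) (Real.exp_pos _)) (hr i))
  simp only [smul_eq_mul] at h2
  have h3 : ∀ i, r i * (w i * Real.exp (a i / η) / r i) = w i * Real.exp (a i / η) := by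
    intro i
    have := hr i
    field_simp
  rw [Finset.sum_congr rfl (fun i _ => h3 i)] at h2
  have h4 : ∀ i, r i * Real.log (w i * Real.exp (a i / η) / r i)
      = a i * r i / η - Real.log (r i / w i) * r i := by
    intro i
    rw [Real.log_div (mul_pos (hw i) (Real.exp_pos _)).ne' (hr i).ne',
      Real.log_mul (hw i).ne' (Real.exp_pos _).ne', Real.log_exp,
      Real.log_div (hr i).ne' (hw i).ne']
    ring
  rw [Finset.sum_congr rfl (fun i _ => h4 i), Finset.sum_sub_distrib, ← Finset.sum_div] at h2
  have h5 : ∑ i, (η * (Real.log (r i / w i) - s)) * r i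
      = η * ∑ i, Real.log (r i / w i) * r i - η * s := by
    have : ∀ i, (η * (Real.log (r i / w i) - s)) * r i
      = η * (Real.log (r i / w i) * r i) - η * s * r i := fun i => by ring
    rw [Finset.sum_congr rfl (fun i _ => this i), Finset.sum_sub_distrib, ← Finset.mul_sum,
      ← Finset.mul_sum, hr1, mul_one]
  rw [h1, Real.log_exp, h5]
  have h6 := mul_le_mul_of_nonneg_left h2 hη.le
  rw [mul_sub, mul_div_cancel₀ _ hη.ne'] at h6
  linarith

theorem half_aux {n : ℕ} (hn : 2 ≤ n) (η : ℝ) (hη : 0 < η)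
    (C : Fin n → Fin n → ℝ) (hC : ∀ i j, 0 ≤ C i j) (M : ℝ) (hM : ∀ i j, C i j ≤ M)
    (r c : Fin n → ℝ) (hr : ∀ i, 0 < r i) (hr1 : ∑ i, r i = 1)
    (m : ℝ) (hm : 0 < m) (hmr : ∀ i, m ≤ r i) (a b : Fin n → ℝ) :
    ∃ a' : Fin n → ℝ, phiLog η C r c a' b ≤ phiLog η C r c a b ∧
      ∀ i, |a' i| ≤ M - η * Real.log m := by
  have : Nonempty (Fin n) := ⟨⟨0, by omega⟩⟩
  let z : Fin n := ⟨0, by omega⟩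
  let w : Fin n → ℝ := fun i => ∑ j, Real.exp (-(C i j - b j) / η - 1)
  have hw : ∀ i, 0 < w i := fun i => Finset.sum_pos (fun j _ => Real.exp_pos _) Finset.univ_nonempty
  have hphi : ∀ a : Fin n → ℝ, phiLog η C r c a b =
      (η * Real.log (∑ i, w i * Real.exp (a i / η)) - ∑ i, a i * r i) - (∑ j, b j * c j) - 1 := by
    intro a
    unfold phiLog
    suffices h : ∑ i, ∑ j, Real.exp (-(C i j - a i - b j) / η - 1)
        = ∑ i, w i * Real.exp (a i / η) by rw [h]
    refine Finset.sum_congr rfl fun i _ => ?_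
    simp only [w]
    rw [Finset.sum_mul]
    refine Finset.sum_congr rfl fun j _ => ?_
    rw [← Real.exp_add]
    congr 1
    ring
  refine ⟨fun i => η * (Real.log (r i / w i) - Real.log (r z / w z)), ?_, ?_⟩
  · rw [hphi, hphi]
    have := core_aux η hη w r hw hr hr1 a (Real.log (r z / w z))
    linarith
  · have hwl : ∀ i k, Real.log (w i) ≤ M / η + Real.log (w k) := by
      intro i k
      rw [← Real.log_exp (M / η), ← Real.log_mul (Real.exp_pos _).ne' (hw k).ne']
      refine Real.log_le_log (hw i) ?_
      simp only [w]
      rw [Finset.mul_sum]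
      refine Finset.sum_le_sum fun j _ => ?_
      rw [← Real.exp_add]
      refine Real.exp_le_exp.mpr ?_
      have h : (C k j - C i j) / η ≤ M / η :=
        div_le_div_of_nonneg_right (by linarith [hC i j, hM k j]) hη.le
      have e : -(C i j - b j) / η - 1 = (C k j - C i j) / η + (-(C k j - b j) / η - 1) := by ring
      linarith
    have hrl : ∀ i, Real.log m ≤ Real.log (r i) := fun i => Real.log_le_log hm (hmr i)
    have hr0 : ∀ i, Real.log (r i) ≤ 0 := fun i => Real.log_nonpos (hr i).le (by
      rw [← hr1]
      exact Finset.single_le_sum (fun i _ => (hr i).le) (Finset.mem_univ i))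
    intro i
    rw [abs_mul, abs_of_pos hη]
    have e : M - η * Real.log m = η * (M / η - Real.log m) := by field_simp
    rw [e]
    refine mul_le_mul_of_nonneg_left ?_ hη.le
    rw [Real.log_div (hr i).ne' (hw i).ne', Real.log_div (hr z).ne' (hw z).ne', abs_le]
    constructor <;> linarith [hwl i z, hwl z i, hrl i, hrl z, hr0 i, hr0 z]

theorem phi_swap {n : ℕ} (η : ℝ) (C : Fin n → Fin n → ℝ) (r c a b : Fin n → ℝ) :
    phiLog η C r c a b = phiLog η (fun i j => C j i) c r b a := by
  unfold phiLog
  rw [Finset.sum_comm]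
  have : ∀ i j, -(C i j - a i - b j) / η - 1 = -(C i j - b j - a i) / η - 1 := fun i j => by ring
  simp only [this]
  ring

theorem stmt18 (n : ℕ) (hn : 2 ≤ n) (η : ℝ) (hη : 0 < η)
    (C : Fin n → Fin n → ℝ) (hC : ∀ i j, 0 ≤ C i j)
    (r c : Fin n → ℝ) (hr : ∀ i, 0 < r i) (hc : ∀ j, 0 < c j)
    (hr1 : ∑ i, r i = 1) (hc1 : ∑ j, c j = 1)
    (R : ℝ)
    (hR : R = matSup C / η + Real.log (n : ℝ) - 2 * Real.log (minrc r c)) :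
    ∃ as bs : Fin n → ℝ,
      (∀ a b : Fin n → ℝ, phiLog η C r c as bs ≤ phiLog η C r c a b) ∧
      infNorm as ≤ η * (R + 1 / 2) ∧ infNorm bs ≤ η * (R + 1 / 2) := by
  have : Nonempty (Fin n) := ⟨⟨0, by omega⟩⟩
  have hM : ∀ i j, C i j ≤ matSup C := fun i j =>
    (le_ciSup (Set.finite_range (fun j => C i j)).bddAbove j).trans
      (le_ciSup (f := fun i => ⨆ j, C i j) (Set.finite_range _).bddAbove i)
  have hmr : ∀ i, minrc r c ≤ r i := fun i =>
    (min_le_left _ _).trans (ciInf_le (Set.finite_range r).bddBelow i)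
  have hmc : ∀ i, minrc r c ≤ c i := fun i =>
    (min_le_right _ _).trans (ciInf_le (Set.finite_range c).bddBelow i)
  have hm : 0 < minrc r c := by
    obtain ⟨i, hi⟩ := exists_eq_ciInf_of_finite (f := r)
    obtain ⟨j, hj⟩ := exists_eq_ciInf_of_finite (f := c)
    unfold minrc
    rw [← hi, ← hj]
    exact lt_min (hr i) (hc j)
  set M := matSup C
  set m := minrc r c
  set K := M - η * Real.log m with hK
  let z : Fin n := ⟨0, by omega⟩
  have hlm : Real.log m ≤ 0 := Real.log_nonpos hm.le ((hmr z).trans (by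
      rw [← hr1]
      exact Finset.single_le_sum (fun i _ => (hr i).le) (Finset.mem_univ z)))
  have hM0 : 0 ≤ M := (hC z z).trans (hM z z)
  have hK0 : 0 ≤ K := by nlinarith
  have hKR : K ≤ η * (R + 1 / 2) := by
    have hln : 0 ≤ Real.log (n : ℝ) := Real.log_natCast_nonneg n
    have e : η * (R + 1 / 2) = M + η * Real.log n - 2 * (η * Real.log m) + η / 2 := by
      rw [hR]
      field_simp
    rw [e]
    nlinarith [mul_nonneg hη.le hln]
  let S : Set ((Fin n → ℝ) × (Fin n → ℝ)) :=
    (Set.univ.pi fun _ => Set.Icc (-K) K) ×ˢ (Set.univ.pi fun _ => Set.Icc (-K) K)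
  have hS : IsCompact S :=
    (isCompact_univ_pi fun _ => isCompact_Icc).prod (isCompact_univ_pi fun _ => isCompact_Icc)
  have hne : S.Nonempty := ⟨(0, 0), 
    ⟨fun _ _ => ⟨neg_nonpos.mpr hK0, hK0⟩, fun _ _ => ⟨neg_nonpos.mpr hK0, hK0⟩⟩⟩
  have hcont : Continuous fun p : (Fin n → ℝ) × (Fin n → ℝ) => phiLog η C r c p.1 p.2 := by
    unfold phiLog
    have : Continuous fun p : (Fin n → ℝ) × (Fin n → ℝ) =>
        Real.log (∑ i, ∑ j, Real.exp (-(C i j - p.1 i - p.2 j) / η - 1)) := by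
      refine Continuous.log (by fun_prop) fun p => ?_
      exact (Finset.sum_pos (fun i _ => Finset.sum_pos (fun j _ => Real.exp_pos _)
        Finset.univ_nonempty) Finset.univ_nonempty).ne'
    fun_prop
  obtain ⟨p, hp, hmin⟩ := hS.exists_isMinOn hne hcont.continuousOn
  have hnorm : ∀ u : Fin n → ℝ, (∀ i, |u i| ≤ K) → infNorm u ≤ η * (R + 1 / 2) :=
    fun u hu => ciSup_le fun i => (hu i).trans hKR
  refine ⟨p.1, p.2, fun a b => ?_, hnorm _ fun i => abs_le.mpr (hp.1 i trivial),
    hnorm _ fun i => abs_le.mpr (hp.2 i trivial)⟩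
  obtain ⟨a', ha, ha'⟩ := half_aux hn η hη C hC M hM r c hr hr1 m hm hmr a b
  obtain ⟨b', hb, hb'⟩ := half_aux hn η hη (fun i j => C j i) (fun i j => hC j i) M
    (fun i j => hM j i) c r hc hc1 m hm hmc b a'
  rw [← phi_swap η C r c a' b', ← phi_swap η C r c a' b] at hb
  have h := isMinOn_iff.mp hmin (a', b')
    ⟨fun i _ => abs_le.mp (ha' i), fun i _ => abs_le.mp (hb' i)⟩
  exact h.trans (hb.trans ha)
end
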